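/- arXiv:0805.0670 — 3 statements merged into one kernel-verified Lean document; each statement's English description precedes it below -/
import Mathlib

section
/- Let T be a finite rooted planar binary tree with h ≥ 2 leaves, a = (a_1,…,a_h) a composition of n, and 0 ≤ m ≤ n. The family of functions Φ(T(a), m, T_r(k)) ∈ M^{n−m,m}, as T_r(k) ranges over all representation labelings of T with root label k ≤ min{m, n−m}, consists of nonzero, pairwise orthogonal functions, and its linear span is exactly the space of all functions in M^{n−m,m} invariant under the Young subgroup S_a = S_{a_1}×⋯×S_{a_h}; in particular this family is an orthogonal basis of that space. -/
/-!
The proof is by induction on the tree. For a labelled tree of size `N` with root label `k`, the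
squared norm of `Φ(T, m)` is `C · binom(N - 2k, m - k)` with `C > 0` independent of `m`
(`treeIP_self`). Hence the inner product of two tree functions whose root sons carry equal labelled
subtrees is, up to a positive constant, the inner product of two Hahn polynomials for the
hypergeometric weight `binom(a, x) binom(b, c - x)`; if the labelled subtrees differ, it vanishes by
induction (`treeIP_eq_zero`).

The Hahn polynomials are handled through the `sl₂` ladder. In the variables `x` and `y = c - x`, the
operators `d* f (x, y) = x f(x - 1, y) + y f(x, y - 1)` and
`d f (x, y) = (a - x) f(x + 1, y) + (b - y) f(x, y + 1)` are adjoint for the hypergeometric weights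
(`ladder_adjoint`) and map `E_p` to multiples of `E_p` at the neighbouring level (`hahnXY_raise`,
`hahnXY_lower`). So the `E_p` are eigenfunctions of `d d*` with distinct eigenvalues, which gives
orthogonality, and the same relations give the dependence of the norm on `c`.

For spanning, at a fixed level there are as many Hahn polynomials as points, so delta functions are
combinations of Hahn polynomials (`hahn_complete`). Thus a product of tree functions of the two sons
is a combination of tree functions of the father (`mul_mem_span`), and by induction the indicator of
any profile (prescribed intersection sizes with all blocks) is in the span (`indicator_mem_span`).
Since the Young subgroup acts transitively on the sets of a given profile
(`exists_perm_of_sameProfile`), every invariant function is a combination of such indicators.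
-/

open Finset

noncomputable section

/-- The Radon transform `d : M^{n-m,m} → M^{n-m+1,m-1}`, `(df)(B) = ∑_{x ∉ B} f(B ∪ {x})`. -/
def dR (n : ℕ) (f : Finset (Fin n) → ℂ) : Finset (Fin n) → ℂ :=
  fun B => ∑ x ∈ Bᶜ, f (insert x B)

/-- The adjoint Radon transform `d* : M^{n-m,m} → M^{n-m-1,m+1}`. -/
def dS (n : ℕ) (f : Finset (Fin n) → ℂ) : Finset (Fin n) → ℂ :=
  fun B => ∑ x ∈ B, f (B.erase x)

/-- `R_q = (d*)^q / q!`, i.e. `(R_q f)(B) = ∑_{A ⊆ B, |A| = |B| - q} f(A)`. -/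
def RT (n q : ℕ) (f : Finset (Fin n) → ℂ) : Finset (Fin n) → ℂ :=
  fun B => if q ≤ B.card then ∑ A ∈ B.powersetCard (B.card - q), f A else 0

/-- Pochhammer symbol `(t)_p = t(t+1)⋯(t+p-1)`. -/
def poch (t : ℤ) (p : ℕ) : ℤ := ∏ i ∈ Finset.range p, (t + i)

/-- Dunkl-normalized Hahn polynomial value `E_m(a,b,c,x)`. -/
def hahnE (m : ℕ) (a b c x : ℤ) : ℤ :=
  ∑ j ∈ Finset.Icc (max 0 (x - c + m)) (min (m : ℤ) x),
    (-1) ^ j.toNat * (m.choose j.toNat : ℤ) * poch (b - m + 1) j.toNat * poch (-x) j.toNat *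
      poch (a - m + 1) (m - j.toNat) * poch (x - c) (m - j.toNat)

/-- Inner product `⟨f, g⟩ = ∑ f(s) conj (g s)`. -/
def ip (n : ℕ) (f g : Finset (Fin n) → ℂ) : ℂ :=
  ∑ s : Finset (Fin n), f s * (starRingEnd ℂ) (g s)

/-- Action of `S_n`: `(g · f)(ω) = f (g⁻¹ ω)`. -/
def permAct (n : ℕ) (g : Equiv.Perm (Fin n)) (f : Finset (Fin n) → ℂ) :
    Finset (Fin n) → ℂ :=
  fun s => f (s.image ⇑g⁻¹)

/-- The block `{o+1, …, o+a}` of the ground set `{1, …, n}` (0-indexed: positions `o ≤ x < o+a`). -/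
def block (n o a : ℕ) : Finset (Fin n) :=
  Finset.filter (fun x => o ≤ (x : ℕ) ∧ (x : ℕ) < o + a) Finset.univ

/-- Tensor product relative to the partition `A = {1,…,h}`, `B = {h+1,…,n}`:
`(φ ⊗ ψ)(Z) = φ(Z ∩ A) · ψ(Z ∩ B)`. -/
def tens (n h : ℕ) (φ ψ : Finset (Fin n) → ℂ) : Finset (Fin n) → ℂ :=
  fun Z => φ (Z ∩ block n 0 h) * ψ (Z ∩ block n h (n - h))

/-- A finite rooted planar binary tree, carrying at each leaf a composition part and at each
internal vertex a representation label. -/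
inductive BT where
  | leaf (a : ℕ) : BT
  | node (κ : ℕ) (l r : BT) : BT

/-- The sum of the composition labels of a (sub)tree. -/
def BT.size : BT → ℕ
  | .leaf a => a
  | .node _ l r => l.size + r.size

/-- The representation label at the root (0 at a leaf). -/
def BT.rlabel : BT → ℕ
  | .leaf _ => 0
  | .node κ _ _ => κ

/-- Number of leaves. -/
def BT.nleaves : BT → ℕ
  | .leaf _ => 1
  | .node _ l r => l.nleaves + r.nleaves

/-- All composition parts are positive. -/
def BT.posParts : BT → Prop
  | .leaf a => 0 < a
  | .node _ l r => l.posParts ∧ r.posParts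

/-- Validity of a representation labeling: at each internal vertex with label `κ`, whose
composition label has sum `N` and whose sons carry labels `i`, `j` (composition sums `t`,
`N - t`), one has `κ - t ≤ j - i ≤ N - t - κ` and `i + j ≤ κ`; leaves carry label `0`. -/
def BT.valid : BT → Prop
  | .leaf _ => True
  | .node κ l r => l.valid ∧ r.valid ∧
      (κ : ℤ) - l.size ≤ (r.rlabel : ℤ) - l.rlabel ∧
      (r.rlabel : ℤ) - l.rlabel ≤ (r.size : ℤ) - κ ∧
      l.rlabel + r.rlabel ≤ κ

/-- Same underlying planar tree and same composition labels at the leaves. -/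
def sameShape : BT → BT → Prop
  | .leaf a, .leaf b => a = b
  | .node _ l r, .node _ l' r' => sameShape l l' ∧ sameShape r r'
  | _, _ => False

/-- The intertwining function `Φ(T(a), m, T_r(k))`, for the subtree occupying the block of
size `size` starting at offset `o` in `{1,…,n}`. -/
def PhiT (n : ℕ) : BT → ℕ → ℕ → Finset (Fin n) → ℂ
  | .leaf a, o, m => fun Z => if Z ⊆ block n o a ∧ Z.card = m then 1 else 0
  | .node κ l r, o, m => fun Z =>
      ∑ w ∈ Finset.Icc (max r.rlabel (l.rlabel + m - l.size))
          (min (r.size - r.rlabel) (m - l.rlabel)),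
        ((hahnE (κ - l.rlabel - r.rlabel) ((r.size : ℤ) - 2 * r.rlabel)
            ((l.size : ℤ) - 2 * l.rlabel) ((m : ℤ) - l.rlabel - r.rlabel)
            ((w : ℤ) - r.rlabel) : ℤ) : ℂ) *
          PhiT n l o (m - w) (Z ∩ block n o l.size) *
          PhiT n r (o + l.size) w (Z ∩ block n (o + l.size) r.size)

/-- `g ∈ S_n` preserves every block of the composition carried by the tree. -/
def presBlocks (n : ℕ) : BT → ℕ → Equiv.Perm (Fin n) → Prop
  | .leaf a, o, g => Finset.image ⇑g (block n o a) = block n o a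
  | .node _ l r, o, g => presBlocks n l o g ∧ presBlocks n r (o + l.size) g

/-! ### Hahn polynomials and the two ladder relations -/

/-- The Hahn polynomial `E_p(a, b, x + y, x)` as a function of the pair `(x, y)`, with the
summation extended to all `0 ≤ j ≤ p`. -/
def hahnXY (p : ℕ) (a b x y : ℤ) : ℤ :=
  ∑ j ∈ Finset.range (p + 1), (-1) ^ j * (p.choose j : ℤ) * poch (b - p + 1) j * poch (-x) j *
    poch (a - p + 1) (p - j) * poch (-y) (p - j)

lemma poch_succ (t : ℤ) (j : ℕ) : poch t (j + 1) = poch t j * (t + j) := by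
  simp [poch, Finset.prod_range_succ]

lemma poch_succ' (t : ℤ) (j : ℕ) : poch t (j + 1) = t * poch (t + 1) j := by
  simp only [poch, Finset.prod_range_succ']
  rw [mul_comm]
  congr 1
  · simp
  · refine Finset.prod_congr rfl fun i _ => ?_
    push_cast; ring

lemma poch_neg_eq_zero {x j : ℕ} (h : x < j) : poch (-(x : ℤ)) j = 0 :=
  Finset.prod_eq_zero (Finset.mem_range.2 h) (by simp)

lemma poch_pos {t : ℤ} (h : 0 < t) (j : ℕ) : 0 < poch t j :=
  Finset.prod_pos fun i _ => by positivity

/-- On the range `0 ≤ x ≤ c` the restrictions on the summation index in `hahnE` only drop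
vanishing terms. -/
lemma hahnE_eq (p : ℕ) (a b : ℤ) {x c : ℕ} (h : x ≤ c) :
    hahnE p a b c x = hahnXY p a b x ((c - x : ℕ) : ℤ) := by
  unfold hahnE hahnXY
  refine Finset.sum_of_injOn Int.toNat ?_ ?_ ?_ ?_
  · intro i hi j hj hij
    simp only [Finset.coe_Icc, Set.mem_Icc, max_le_iff, le_min_iff] at hi hj
    omega
  · intro i hi
    simp only [Finset.coe_Icc, Set.mem_Icc, max_le_iff, le_min_iff] at hi
    simp only [Finset.coe_range, Set.mem_Iio]
    omega
  · intro j hj hn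
    rw [Finset.mem_range] at hj
    by_cases h1 : x < j
    · rw [poch_neg_eq_zero h1]; ring
    by_cases h2 : c - x < p - j
    · rw [poch_neg_eq_zero h2]; ring
    refine absurd ⟨(j : ℤ), ?_, by simp⟩ hn
    simp only [Finset.coe_Icc, Set.mem_Icc, max_le_iff, le_min_iff]
    omega
  · intro i _
    rw [show (x : ℤ) - c = -((c - x : ℕ) : ℤ) by omega]

lemma mul_poch_sub_one (x : ℤ) (j : ℕ) : x * poch (-(x - 1)) j = (x - j) * poch (-x) j := by
  have h1 := poch_succ (-x) j
  have h2 := poch_succ' (-x) j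
  rw [show -x + 1 = -(x - 1) by ring] at h2
  linear_combination h2 - h1

/-- Raising relation: `d*` maps `E_p` at level `c` to `(c + 1 - p) E_p` at level `c + 1`. -/
lemma hahnXY_raise (p : ℕ) (a b x y : ℤ) :
    x * hahnXY p a b (x - 1) y + y * hahnXY p a b x (y - 1) =
      (x + y - p) * hahnXY p a b x y := by
  unfold hahnXY
  rw [Finset.mul_sum, Finset.mul_sum, Finset.mul_sum, ← Finset.sum_add_distrib]
  refine Finset.sum_congr rfl fun j hj => ?_
  rw [Finset.mem_range] at hj
  have h1 := mul_poch_sub_one x j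
  have h2 := mul_poch_sub_one y (p - j)
  rw [Nat.cast_sub (by omega)] at h2
  linear_combination
    ((-1) ^ j * (p.choose j : ℤ) * poch (b - p + 1) j *
      poch (a - p + 1) (p - j) * poch (-y) (p - j)) * h1 +
    ((-1) ^ j * (p.choose j : ℤ) * poch (b - p + 1) j * poch (-x) j *
      poch (a - p + 1) (p - j)) * h2

lemma poch_neg_succ (x : ℤ) (j : ℕ) :
    poch (-(x + 1)) (j + 1) = poch (-x) (j + 1) - (j + 1) * poch (-x) j := by
  have h1 := poch_succ (-x) j
  have h2 := poch_succ' (-(x + 1)) j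
  rw [show -(x + 1) + 1 = -x by ring] at h2
  linear_combination h2 - h1

/-- Lowering relation: `d` maps `E_p` at level `c` to `(a + b - p - c + 1) E_p` at
level `c - 1`. -/
lemma hahnXY_lower (p : ℕ) (a b x y : ℤ) :
    (a - x) * hahnXY p a b (x + 1) y + (b - y) * hahnXY p a b x (y + 1) =
      (a + b - p - (x + y)) * hahnXY p a b x y := by
  -- The difference of both sides is `∑ (U j + V j)` with `U 0 = V p = 0`, and it telescopes:
  -- `U (j + 1) + V j = 0`.
  set C : ℕ → ℤ := fun j => (-1) ^ j * (p.choose j : ℤ) * poch (b - p + 1) j *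
    poch (a - p + 1) (p - j) with hC
  set U : ℕ → ℤ := fun j => C j * poch (-y) (p - j) *
    ((a - x) * (poch (-(x + 1)) j - poch (-x) j) + j * poch (-x) j) with hU
  set V : ℕ → ℤ := fun j => C j * poch (-x) j *
    ((b - y) * (poch (-(y + 1)) (p - j) - poch (-y) (p - j)) +
      ((p : ℤ) - j) * poch (-y) (p - j)) with hV
  have key : (a - x) * hahnXY p a b (x + 1) y + (b - y) * hahnXY p a b x (y + 1) -
      (a + b - p - (x + y)) * hahnXY p a b x y =
      ∑ j ∈ Finset.range (p + 1), U j + ∑ j ∈ Finset.range (p + 1), V j := by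
    unfold hahnXY
    rw [Finset.mul_sum, Finset.mul_sum, Finset.mul_sum, ← Finset.sum_add_distrib,
      ← Finset.sum_add_distrib, ← Finset.sum_sub_distrib]
    refine Finset.sum_congr rfl fun j _ => ?_
    simp only [hU, hV, hC]
    ring
  have U0 : U 0 = 0 := by simp [hU, poch]
  have Vp : V p = 0 := by simp [hV, poch]
  rw [Finset.sum_range_succ', Finset.sum_range_succ V, U0, Vp, add_zero, add_zero,
    ← Finset.sum_add_distrib] at key
  rw [Finset.sum_eq_zero] at key
  · linarith
  intro j hj
  rw [Finset.mem_range] at hj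
  obtain ⟨k, rfl⟩ : ∃ k, p = j + k + 1 := ⟨p - j - 1, by omega⟩
  simp only [hU, hV, hC]
  rw [show j + k + 1 - (j + 1) = k by omega, show j + k + 1 - j = k + 1 by omega,
    poch_neg_succ, poch_neg_succ, poch_succ (b - _ + 1) j, poch_succ (a - _ + 1) k,
    poch_succ (-x) j, poch_succ (-y) k, pow_succ]
  have hch : (((j + k + 1).choose (j + 1) : ℕ) : ℤ) * (j + 1) =
      ((j + k + 1).choose j : ℤ) * (k + 1) := by
    have := Nat.choose_succ_right_eq (j + k + 1) j
    rw [show j + k + 1 - j = k + 1 by omega] at this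
    exact_mod_cast this
  push_cast
  set X := poch (b - (j + k + 1) + 1) j
  set Y := poch (a - (j + k + 1) + 1) k
  linear_combination ((-1) ^ j * X * (b - k) * Y * poch (-x) j * poch (-y) k * (a - j)) * hch

/-! ### Orthogonality and completeness of the Hahn polynomials -/

/-- The inner product of `E_p` and `E_q` at level `c`, with the hypergeometric weight
`C(a, x) C(b, c - x)`. -/
def hahnIP (p q a b c : ℕ) : ℤ :=
  ∑ z ∈ HasAntidiagonal.antidiagonal c, (a.choose z.1 : ℤ) * (b.choose z.2 : ℤ) *
    (hahnXY p a b z.1 z.2 * hahnXY q a b z.1 z.2)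

lemma choose_succ_mul (a x : ℕ) :
    (a.choose (x + 1) : ℤ) * ((x + 1 : ℕ) : ℤ) = (a.choose x : ℤ) * ((a : ℤ) - x) := by
  rcases le_or_gt x a with h | h
  · have := Nat.choose_succ_right_eq a x
    rw [← Nat.cast_sub h]
    exact_mod_cast this
  · rw [Nat.choose_eq_zero_of_lt h, Nat.choose_eq_zero_of_lt (by omega)]; simp

/-- `d*` and `d` are adjoint to each other for the hypergeometric weights. -/
lemma ladder_adjoint (a b c : ℕ) (f g : ℤ → ℤ → ℤ) :
    ∑ z ∈ HasAntidiagonal.antidiagonal (c + 1), (a.choose z.1 : ℤ) * (b.choose z.2 : ℤ) *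
      (((z.1 : ℤ) * f (z.1 - 1) z.2 + (z.2 : ℤ) * f z.1 (z.2 - 1)) * g z.1 z.2) =
    ∑ z ∈ HasAntidiagonal.antidiagonal c, (a.choose z.1 : ℤ) * (b.choose z.2 : ℤ) *
      (f z.1 z.2 * (((a : ℤ) - z.1) * g (z.1 + 1) z.2 + ((b : ℤ) - z.2) * g z.1 (z.2 + 1))) := by
  have e : ∀ z : ℕ × ℕ, (a.choose z.1 : ℤ) * (b.choose z.2 : ℤ) *
      (((z.1 : ℤ) * f (z.1 - 1) z.2 + (z.2 : ℤ) * f z.1 (z.2 - 1)) * g z.1 z.2) =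
      (a.choose z.1 : ℤ) * (z.1 : ℤ) * (b.choose z.2 : ℤ) * f (z.1 - 1) z.2 * g z.1 z.2 +
      (a.choose z.1 : ℤ) * ((b.choose z.2 : ℤ) * (z.2 : ℤ)) * f z.1 (z.2 - 1) * g z.1 z.2 :=
    fun z => by ring
  simp only [e]
  rw [Finset.sum_add_distrib, Finset.Nat.sum_antidiagonal_succ,
    Finset.Nat.sum_antidiagonal_succ' (f := fun z : ℕ × ℕ => (a.choose z.1 : ℤ) *
      ((b.choose z.2 : ℤ) * (z.2 : ℤ)) * f z.1 (z.2 - 1) * g z.1 z.2)]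
  simp only [choose_succ_mul]
  simp only [Nat.cast_zero, mul_zero, zero_mul, zero_add]
  rw [← Finset.sum_add_distrib]
  refine Finset.sum_congr rfl fun z _ => ?_
  push_cast
  rw [add_sub_cancel_right, add_sub_cancel_right]
  ring

lemma hahnIP_comm (p q a b c : ℕ) : hahnIP p q a b c = hahnIP q p a b c := by
  unfold hahnIP
  refine Finset.sum_congr rfl fun z _ => ?_
  ring

lemma hahnIP_succ (p q a b c : ℕ) :
    ((c : ℤ) + 1 - p) * hahnIP p q a b (c + 1) = ((a : ℤ) + b - q - c) * hahnIP p q a b c := by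
  have h := ladder_adjoint a b c (hahnXY p a b) (hahnXY q a b)
  simp only [hahnXY_raise, hahnXY_lower] at h
  unfold hahnIP
  rw [Finset.mul_sum, Finset.mul_sum]
  convert h using 1
  · refine Finset.sum_congr rfl fun z hz => ?_
    have : (z.1 : ℤ) + z.2 = c + 1 := by exact_mod_cast HasAntidiagonal.mem_antidiagonal.1 hz
    rw [this]; ring
  · refine Finset.sum_congr rfl fun z hz => ?_
    have : (z.1 : ℤ) + z.2 = c := by exact_mod_cast HasAntidiagonal.mem_antidiagonal.1 hz
    rw [this]; ring

/-- Moving up and down once in both possible ways shows that `E_p` and `E_q` belong to different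
eigenvalues of `d d*`. -/
lemma hahnIP_eq_zero_of_lt {p q a b c : ℕ} (hpq : p < q) (hc : q ≤ c) (hc' : c + q ≤ a + b) :
    hahnIP p q a b c = 0 := by
  have h1 := hahnIP_succ p q a b c
  have h2 := hahnIP_succ q p a b c
  rw [hahnIP_comm q p, hahnIP_comm q p] at h2
  have h3 : (((c : ℤ) + 1 - p) * (a + b - p - c) - ((c : ℤ) + 1 - q) * (a + b - q - c)) *
      hahnIP p q a b c = 0 := by
    linear_combination ((c : ℤ) + 1 - q) * h1 - ((c : ℤ) + 1 - p) * h2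
  rcases mul_eq_zero.1 h3 with h | h
  · exfalso
    have e1 : (c : ℤ) + 1 - q ≥ 1 := by omega
    have e2 : (a : ℤ) + b - q - c ≥ 0 := by omega
    have e3 : (q : ℤ) - p ≥ 1 := by omega
    nlinarith [mul_nonneg (by linarith : (0 : ℤ) ≤ q - p) e2,
      mul_pos (by linarith : (0 : ℤ) < q - p) (by linarith : (0 : ℤ) < (c : ℤ) + 1 - q)]
  · exact h

lemma hahnIP_eq_zero {p q a b c : ℕ} (hpq : p ≠ q) (hp : p ≤ c) (hpab : c + p ≤ a + b)
    (hq : q ≤ c) (hqab : c + q ≤ a + b) : hahnIP p q a b c = 0 := by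
  rcases lt_or_gt_of_ne hpq with h | h
  · exact hahnIP_eq_zero_of_lt h hq hqab
  · rw [hahnIP_comm]; exact hahnIP_eq_zero_of_lt h hp hpab

/-- The dependence of the norm of `E_p` on the level is a binomial coefficient. -/
lemma hahnIP_self {p a b : ℕ} (hpa : p ≤ a) (hpb : p ≤ b) (u : ℕ) :
    hahnIP p p a b (p + u) = ((a + b - 2 * p).choose u : ℤ) * hahnIP p p a b p := by
  induction u with
  | zero => simp
  | succ u ih =>
    have h := hahnIP_succ p p a b (p + u)
    have h2 := choose_succ_mul (a + b - 2 * p) u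
    rw [ih] at h
    rw [Nat.cast_sub (by omega)] at h2
    push_cast at h h2
    have h3 : ((u : ℤ) + 1) ≠ 0 := by positivity
    refine mul_left_cancel₀ h3 ?_
    rw [← add_assoc]
    linear_combination h - hahnIP p p a b p * h2

lemma hahnIP_pos {p a b : ℕ} (hpa : p ≤ a) (hpb : p ≤ b) : 0 < hahnIP p p a b p := by
  unfold hahnIP
  refine Finset.sum_pos' (fun z _ => mul_nonneg (by positivity) (mul_self_nonneg _))
    ⟨(0, p), by simp, ?_⟩
  have h1 : 0 < b.choose p := Nat.choose_pos hpb
  have h2 : hahnXY p a b 0 p ≠ 0 := by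
    unfold hahnXY
    rw [Finset.sum_eq_single 0]
    · have e1 := poch_pos (t := (a : ℤ) - p + 1) (by omega) p
      have e2 : poch (-(p : ℤ)) p ≠ 0 := by
        refine Finset.prod_ne_zero_iff.2 fun i hi => ?_
        rw [Finset.mem_range] at hi
        omega
      simp [poch] at e1 e2 ⊢
      exact ⟨by simpa [Finset.prod_eq_zero_iff] using e1.ne', e2⟩
    · intro j _ hj
      have := poch_neg_eq_zero (x := 0) (Nat.pos_of_ne_zero hj)
      rw [Nat.cast_zero] at this
      rw [this]; ring
    · simp
  have h3 : 0 < hahnXY p a b 0 p * hahnXY p a b 0 p := mul_self_pos.2 h2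
  simpa using mul_pos (by exact_mod_cast h1 : (0 : ℤ) < b.choose p) h3

/-- Completeness: on the points `x` carrying positive weight at level `c`, the delta function is a
combination of the `E_p`, `p ≤ min {a, b, c, a + b - c}`. There are as many such `p` as points, so
the orthogonality relations say that a square matrix has a right inverse; that inverse is also a
left inverse. -/
lemma hahn_complete {a b c x : ℕ} (hxa : x ≤ a) (hxc : x ≤ c) (hxb : c - x ≤ b) :
    ∃ β : ℕ → ℂ, ∀ x' : ℕ, x' ≤ a → x' ≤ c → c - x' ≤ b →
      ∑ p ∈ Finset.range (min (min a b) (min c (a + b - c)) + 1),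
        β p * ((hahnXY p a b x' ((c - x' : ℕ) : ℤ) : ℤ) : ℂ) = if x' = x then 1 else 0 := by
  obtain ⟨s, hs⟩ : ∃ s, s = min (min a b) (min c (a + b - c)) := ⟨_, rfl⟩
  rw [← hs]
  set x0 := c - b with hx0
  set E : ℕ → ℕ → ℂ := fun p u => ((hahnXY p a b u ((c - u : ℕ) : ℤ) : ℤ) : ℂ) with hE
  set W : ℕ → ℂ := fun u => (a.choose u : ℂ) * (b.choose (c - u) : ℂ) with hW
  set N : ℕ → ℂ := fun q => ((hahnIP q q a b c : ℤ) : ℂ) with hN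
  have hN0 : ∀ q, q ≤ s → N q ≠ 0 := by
    intro q hq
    have h1 := hahnIP_self (p := q) (a := a) (b := b) (by omega) (by omega) (c - q)
    rw [show q + (c - q) = c by omega] at h1
    have h2 := hahnIP_pos (p := q) (a := a) (b := b) (by omega) (by omega)
    have h3 : 0 < (a + b - 2 * q).choose (c - q) := Nat.choose_pos (by omega)
    simp only [hN]
    rw [h1, Int.cast_ne_zero]
    positivity
  have hsum : ∀ p q, ∑ i : Fin (s + 1), W (x0 + i) * (E p (x0 + i) * E q (x0 + i)) =
      ((hahnIP p q a b c : ℤ) : ℂ) := by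
    intro p q
    unfold hahnIP
    push_cast
    refine Finset.sum_of_injOn (fun i => (x0 + (i : ℕ), c - (x0 + (i : ℕ)))) ?_ ?_ ?_ ?_
    · intro i _ k _ h
      simp only [Prod.mk.injEq] at h
      exact Fin.ext (by omega)
    · intro i _
      have := i.2
      simp only [Finset.mem_coe, HasAntidiagonal.mem_antidiagonal]
      omega
    · rintro ⟨u, v⟩ hz hn
      simp only [HasAntidiagonal.mem_antidiagonal] at hz
      by_cases h1 : a < u
      · simp [Nat.choose_eq_zero_of_lt h1]
      by_cases h2 : b < v
      · simp [Nat.choose_eq_zero_of_lt h2]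
      refine absurd ⟨⟨u - x0, by omega⟩, by simp, ?_⟩ hn
      simp only [Prod.mk.injEq]
      omega
    · intro i _
      rfl
  let A : Matrix (Fin (s + 1)) (Fin (s + 1)) ℂ := Matrix.of fun p i => E p (x0 + i)
  let B : Matrix (Fin (s + 1)) (Fin (s + 1)) ℂ :=
    Matrix.of fun i q => W (x0 + i) * E q (x0 + i) / N q
  have hAB : A * B = 1 := by
    ext p q
    have hp := p.2
    have hq := q.2
    rw [Matrix.mul_apply]
    have : ∑ i, A p i * B i q = (∑ i : Fin (s + 1), W (x0 + i) *
        (E p (x0 + i) * E q (x0 + i))) / N q := by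
      rw [Finset.sum_div]
      refine Finset.sum_congr rfl fun i _ => ?_
      simp only [A, B, Matrix.of_apply]
      ring
    rw [this, hsum]
    by_cases hpq : p = q
    · subst hpq
      rw [Matrix.one_apply_eq]
      exact div_self (hN0 p (by omega))
    · rw [Matrix.one_apply_ne hpq, hahnIP_eq_zero (fun h => hpq (Fin.ext h)) (by omega) (by omega)
        (by omega) (by omega)]
      simp
  have hBA : B * A = 1 := mul_eq_one_comm.1 hAB
  refine ⟨fun p => W x * E p x / N p, fun x' h1 h2 h3 => ?_⟩
  have h := congrFun (congrFun hBA ⟨x - x0, by omega⟩) ⟨x' - x0, by omega⟩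
  rw [Matrix.mul_apply, Matrix.one_apply] at h
  rw [Finset.sum_range]
  have e1 : x0 + (x - x0) = x := by omega
  have e2 : x0 + (x' - x0) = x' := by omega
  simp only [A, B, Matrix.of_apply, e1, e2] at h
  rw [h]
  simp only [Fin.mk.injEq]
  congr 1
  rw [eq_iff_iff]
  omega

/-! ### Subsets of a union of two consecutive blocks -/

lemma mem_block {n o a : ℕ} {x : Fin n} : x ∈ block n o a ↔ o ≤ (x : ℕ) ∧ (x : ℕ) < o + a := by
  simp [block]

lemma card_block {n o a : ℕ} (h : o + a ≤ n) : (block n o a).card = a := by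
  have : (block n o a).map Fin.valEmbedding = Finset.Ico o (o + a) := by
    ext y
    simp only [Finset.mem_map, mem_block, Fin.valEmbedding_apply, Finset.mem_Ico]
    constructor
    · rintro ⟨x, hx, rfl⟩; exact hx
    · intro hy; exact ⟨⟨y, by omega⟩, hy, rfl⟩
  rw [← Finset.card_map Fin.valEmbedding, this]
  simp

lemma block_disjoint (n o a b : ℕ) : Disjoint (block n o a) (block n (o + a) b) := by
  rw [Finset.disjoint_left]
  intro x hx hy
  rw [mem_block] at hx hy
  omega

lemma block_union (n o a b : ℕ) : block n o a ∪ block n (o + a) b = block n o (a + b) := by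
  ext x
  simp only [Finset.mem_union, mem_block]
  omega

lemma inter_block_left (n o a b : ℕ) (Z : Finset (Fin n)) :
    Z ∩ block n o (a + b) ∩ block n o a = Z ∩ block n o a := by
  rw [← block_union, Finset.inter_assoc, Finset.union_inter_cancel_left]

lemma inter_block_right (n o a b : ℕ) (Z : Finset (Fin n)) :
    Z ∩ block n o (a + b) ∩ block n (o + a) b = Z ∩ block n (o + a) b := by
  rw [← block_union, Finset.inter_assoc, Finset.union_inter_cancel_right]

lemma card_inter_block (n o a b : ℕ) (Z : Finset (Fin n)) :
    (Z ∩ block n o (a + b)).card = (Z ∩ block n o a).card + (Z ∩ block n (o + a) b).card := by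
  rw [← block_union, Finset.inter_union_distrib_left, Finset.card_union_of_disjoint]
  exact (block_disjoint n o a b).mono Finset.inter_subset_right Finset.inter_subset_right

lemma inter_block_self_of_size {n a : ℕ} (h : a = n) (Z : Finset (Fin n)) :
    Z ∩ block n 0 a = Z := by
  rw [Finset.inter_eq_left]
  intro x _
  rw [mem_block]
  have := x.2
  omega

lemma sum_powerset_block (n o a b : ℕ) (F G : Finset (Fin n) → ℂ) :
    ∑ Z ∈ (block n o (a + b)).powerset, F (Z ∩ block n o a) * G (Z ∩ block n (o + a) b) =
      (∑ Z ∈ (block n o a).powerset, F Z) * ∑ Z ∈ (block n (o + a) b).powerset, G Z := by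
  rw [Finset.sum_mul_sum, ← Finset.sum_product']
  have hd := Finset.disjoint_left.1 (block_disjoint n o a b)
  refine Finset.sum_nbij' (fun Z => (Z ∩ block n o a, Z ∩ block n (o + a) b))
    (fun Z => Z.1 ∪ Z.2) ?_ ?_ ?_ ?_ ?_
  · intro Z _
    simp [Finset.inter_subset_right]
  · rintro ⟨X, Y⟩ h
    simp only [Finset.mem_product, Finset.mem_powerset] at h
    rw [Finset.mem_powerset, ← block_union]
    exact Finset.union_subset_union h.1 h.2
  · intro Z h
    rw [Finset.mem_powerset, ← block_union] at h
    simp only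
    rw [← Finset.inter_union_distrib_left, Finset.inter_eq_left.2 h]
  · rintro ⟨X, Y⟩ h
    simp only [Finset.mem_product, Finset.mem_powerset] at h
    obtain ⟨h1, h2⟩ := h
    simp only [Prod.mk.injEq]
    constructor
    · ext x
      simp only [Finset.mem_inter, Finset.mem_union]
      exact ⟨fun ⟨h, hx⟩ => h.resolve_right fun hy => hd hx (h2 hy), fun h => ⟨Or.inl h, h1 h⟩⟩
    · ext x
      simp only [Finset.mem_inter, Finset.mem_union]
      exact ⟨fun ⟨h, hx⟩ => h.resolve_left fun hy => hd (h1 hy) hx, fun h => ⟨Or.inr h, h2 h⟩⟩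
  · intro Z _
    rfl

/-! ### Orthogonality of the functions attached to labelled trees -/

lemma BT.valid.two_mul_rlabel_le {t : BT} (h : t.valid) : 2 * t.rlabel ≤ t.size := by
  cases t with
  | leaf a => simp [BT.rlabel]
  | node κ l r =>
    simp only [BT.valid, BT.rlabel, BT.size] at h ⊢
    omega

lemma sameShape.size_eq {t t' : BT} (h : sameShape t t') : t.size = t'.size := by
  induction t generalizing t' with
  | leaf a =>
    cases t' with
    | leaf b => exact h
    | node κ l r => exact h.elim
  | node κ l r ihl ihr =>
    cases t' with
    | leaf b => exact h.elim
    | node κ' l' r' => exact congrArg₂ (· + ·) (ihl h.1) (ihr h.2)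

lemma PhiT_eq_zero (n : ℕ) (t : BT) (o m : ℕ) (Z : Finset (Fin n))
    (h : (Z ∩ block n o t.size).card ≠ m) : PhiT n t o m Z = 0 := by
  induction t generalizing o m Z with
  | leaf a =>
    simp only [PhiT, BT.size] at h ⊢
    refine if_neg fun hZ => h ?_
    rw [Finset.inter_eq_left.2 hZ.1, hZ.2]
  | node κ l r ihl ihr =>
    simp only [PhiT, BT.size] at h ⊢
    refine Finset.sum_eq_zero fun w hw => ?_
    rw [Finset.mem_Icc, max_le_iff, le_min_iff] at hw
    rw [card_inter_block] at h
    by_cases h1 : (Z ∩ block n (o + l.size) r.size).card = w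
    · rw [ihl, mul_zero, zero_mul]
      rw [Finset.inter_assoc, Finset.inter_self]
      omega
    · rw [ihr, mul_zero]
      rwa [Finset.inter_assoc, Finset.inter_self]

/-- The inner product of two tree functions, over the subsets of the block of the tree only. -/
def treeIP (n o : ℕ) (t₁ : BT) (m₁ : ℕ) (t₂ : BT) (m₂ : ℕ) : ℂ :=
  ∑ Z ∈ (block n o t₁.size).powerset, PhiT n t₁ o m₁ Z * (starRingEnd ℂ) (PhiT n t₂ o m₂ Z)

lemma treeIP_eq_zero_of_ne {n o : ℕ} {t₁ t₂ : BT} {m₁ m₂ : ℕ} (hs : t₁.size = t₂.size)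
    (h : m₁ ≠ m₂) : treeIP n o t₁ m₁ t₂ m₂ = 0 := by
  refine Finset.sum_eq_zero fun Z _ => ?_
  by_cases h1 : (Z ∩ block n o t₁.size).card = m₁
  · rw [PhiT_eq_zero n t₂, map_zero, mul_zero]
    rw [← hs, h1]; exact h
  · rw [PhiT_eq_zero n t₁ _ _ _ h1, zero_mul]

/-- The range of `w` in the recursion defining `PhiT`. -/
def wRange (l r : BT) (m : ℕ) : Finset ℕ :=
  Finset.Icc (max r.rlabel (l.rlabel + m - l.size)) (min (r.size - r.rlabel) (m - l.rlabel))

/-- The coefficient in the recursion defining `PhiT`. -/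
def wCoeff (κ : ℕ) (l r : BT) (m w : ℕ) : ℤ :=
  hahnE (κ - l.rlabel - r.rlabel) ((r.size : ℤ) - 2 * r.rlabel)
    ((l.size : ℤ) - 2 * l.rlabel) ((m : ℤ) - l.rlabel - r.rlabel) ((w : ℤ) - r.rlabel)

lemma PhiT_node (n κ : ℕ) (l r : BT) (o m : ℕ) (Z : Finset (Fin n)) :
    PhiT n (.node κ l r) o m Z = ∑ w ∈ wRange l r m, (wCoeff κ l r m w : ℂ) *
      PhiT n l o (m - w) (Z ∩ block n o l.size) *
      PhiT n r (o + l.size) w (Z ∩ block n (o + l.size) r.size) := rfl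

lemma treeIP_node (n o κ₁ κ₂ m : ℕ) (l₁ r₁ l₂ r₂ : BT) (hl : l₁.size = l₂.size)
    (hr : r₁.size = r₂.size) :
    treeIP n o (.node κ₁ l₁ r₁) m (.node κ₂ l₂ r₂) m =
      ∑ w₁ ∈ wRange l₁ r₁ m, ∑ w₂ ∈ wRange l₂ r₂ m,
        (wCoeff κ₁ l₁ r₁ m w₁ : ℂ) * (wCoeff κ₂ l₂ r₂ m w₂ : ℂ) *
          (treeIP n o l₁ (m - w₁) l₂ (m - w₂) *
            treeIP n (o + l₁.size) r₁ w₁ r₂ w₂) := by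
  unfold treeIP
  simp only [PhiT_node, BT.size, map_sum, Finset.sum_mul_sum]
  rw [Finset.sum_comm]
  refine Finset.sum_congr rfl fun w₁ _ => ?_
  rw [Finset.sum_comm]
  refine Finset.sum_congr rfl fun w₂ _ => ?_
  rw [← Finset.sum_mul_sum, ← sum_powerset_block, Finset.mul_sum]
  refine Finset.sum_congr rfl fun Z _ => ?_
  simp only [map_mul, map_intCast, ← hl, ← hr]
  ring

lemma wCoeff_eq {l r : BT} {κ m w : ℕ} (hl : 2 * l.rlabel ≤ l.size)
    (hr : 2 * r.rlabel ≤ r.size) (hm : l.rlabel + r.rlabel ≤ m) (hw : w ∈ wRange l r m) :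
    wCoeff κ l r m w = hahnXY (κ - l.rlabel - r.rlabel)
      ((r.size - 2 * r.rlabel : ℕ) : ℤ) ((l.size - 2 * l.rlabel : ℕ) : ℤ)
      ((w - r.rlabel : ℕ) : ℤ) ((m - w - l.rlabel : ℕ) : ℤ) := by
  rw [wRange, Finset.mem_Icc, max_le_iff, le_min_iff] at hw
  unfold wCoeff
  rw [show (r.size : ℤ) - 2 * r.rlabel = ((r.size - 2 * r.rlabel : ℕ) : ℤ) by omega,
    show (l.size : ℤ) - 2 * l.rlabel = ((l.size - 2 * l.rlabel : ℕ) : ℤ) by omega,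
    show (m : ℤ) - l.rlabel - r.rlabel = ((m - l.rlabel - r.rlabel : ℕ) : ℤ) by omega,
    show (w : ℤ) - r.rlabel = ((w - r.rlabel : ℕ) : ℤ) by omega,
    hahnE_eq _ _ _ (by omega),
    show m - l.rlabel - r.rlabel - (w - r.rlabel) = m - w - l.rlabel by omega]

/-- The sum over `w` of the products of coefficients and norms is a Hahn inner product. -/
lemma sum_wRange {l r : BT} {m κ₁ κ₂ : ℕ} (hl : 2 * l.rlabel ≤ l.size)
    (hr : 2 * r.rlabel ≤ r.size) (hm : l.rlabel + r.rlabel ≤ m) :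
    ∑ w ∈ wRange l r m, wCoeff κ₁ l r m w * wCoeff κ₂ l r m w *
      (((l.size - 2 * l.rlabel).choose (m - w - l.rlabel) : ℤ) *
        ((r.size - 2 * r.rlabel).choose (w - r.rlabel) : ℤ)) =
    hahnIP (κ₁ - l.rlabel - r.rlabel) (κ₂ - l.rlabel - r.rlabel) (r.size - 2 * r.rlabel)
      (l.size - 2 * l.rlabel) (m - l.rlabel - r.rlabel) := by
  unfold hahnIP wRange
  refine Finset.sum_of_injOn (fun w => (w - r.rlabel, m - w - l.rlabel)) ?_ ?_ ?_ ?_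
  · intro w hw w' hw' h
    simp only [Finset.coe_Icc, Set.mem_Icc, max_le_iff, le_min_iff] at hw hw'
    simp only [Prod.mk.injEq] at h
    omega
  · intro w hw
    simp only [Finset.coe_Icc, Set.mem_Icc, max_le_iff, le_min_iff] at hw
    simp only [Finset.mem_coe, HasAntidiagonal.mem_antidiagonal]
    omega
  · rintro ⟨u, v⟩ hz hn
    simp only [HasAntidiagonal.mem_antidiagonal] at hz
    by_cases h1 : r.size - 2 * r.rlabel < u
    · simp [Nat.choose_eq_zero_of_lt h1]
    by_cases h2 : l.size - 2 * l.rlabel < v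
    · simp [Nat.choose_eq_zero_of_lt h2]
    refine absurd ⟨u + r.rlabel, ?_, ?_⟩ hn
    · simp only [Finset.coe_Icc, Set.mem_Icc, max_le_iff, le_min_iff]
      omega
    · simp only [Prod.mk.injEq]
      omega
  · intro w hw
    rw [Finset.mem_Icc, max_le_iff, le_min_iff] at hw
    rw [wCoeff_eq hl hr hm (Finset.mem_Icc.2 (by rwa [max_le_iff, le_min_iff])),
      wCoeff_eq hl hr hm (Finset.mem_Icc.2 (by rwa [max_le_iff, le_min_iff]))]
    ring

lemma sameShape.symm {t t' : BT} (h : sameShape t t') : sameShape t' t := by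
  induction t generalizing t' with
  | leaf a =>
    cases t' with
    | leaf b => exact Eq.symm h
    | node κ l r => exact h.elim
  | node κ l r ihl ihr =>
    cases t' with
    | leaf b => exact h.elim
    | node κ' l' r' => exact ⟨ihl h.1, ihr h.2⟩

lemma sameShape.trans {t t' t'' : BT} (h : sameShape t t') (k : sameShape t' t'') :
    sameShape t t'' := by
  induction t generalizing t' t'' with
  | leaf a =>
    cases t' with
    | leaf b =>
      cases t'' with
      | leaf c => exact Eq.trans h k
      | node κ l r => exact k.elim
    | node κ l r => exact h.elim
  | node κ l r ihl ihr =>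
    cases t' with
    | leaf b => exact h.elim
    | node κ' l' r' =>
      cases t'' with
      | leaf c => exact k.elim
      | node κ'' l'' r'' => exact ⟨ihl h.1 k.1, ihr h.2 k.2⟩

/-- The squared norm of `Φ(T, m)` is a positive constant, independent of `m`, times
`C(N - 2k, m - k)`. This is precisely the weight for which the Hahn polynomials one level up in the
tree are orthogonal. -/
lemma treeIP_self (n : ℕ) (t : BT) (o : ℕ) (ho : o + t.size ≤ n) (hv : t.valid) :
    ∃ C : ℝ, 0 < C ∧ ∀ m, t.rlabel ≤ m → m + t.rlabel ≤ t.size →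
      treeIP n o t m t m = (C : ℂ) * ((t.size - 2 * t.rlabel).choose (m - t.rlabel) : ℂ) := by
  induction t generalizing o with
  | leaf a =>
    refine ⟨1, one_pos, fun m _ _ => ?_⟩
    simp only [BT.size, BT.rlabel] at ho ⊢
    have h : ∀ Z ∈ (block n o a).powerset, PhiT n (.leaf a) o m Z *
        (starRingEnd ℂ) (PhiT n (.leaf a) o m Z) = if Z.card = m then 1 else 0 := by
      intro Z hZ
      rw [Finset.mem_powerset] at hZ
      simp only [PhiT, hZ, true_and]
      split_ifs <;> simp
    unfold treeIP
    rw [BT.size, Finset.sum_congr rfl h, Finset.sum_boole, ← Finset.powersetCard_eq_filter,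
      Finset.card_powersetCard, card_block ho]
    simp
  | node κ l r ihl ihr =>
    simp only [BT.size, BT.rlabel] at ho ⊢
    obtain ⟨hvl, hvr, h1, h2, h3⟩ := hv
    obtain ⟨Cl, hCl, hl⟩ := ihl o (by omega) hvl
    obtain ⟨Cr, hCr, hr⟩ := ihr (o + l.size) (by omega) hvr
    have hl2 := hvl.two_mul_rlabel_le
    have hr2 := hvr.two_mul_rlabel_le
    set p := κ - l.rlabel - r.rlabel with hp
    set a := r.size - 2 * r.rlabel with ha
    set b := l.size - 2 * l.rlabel with hb
    have hK := hahnIP_pos (p := p) (a := a) (b := b) (by omega) (by omega)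
    refine ⟨Cl * Cr * (hahnIP p p a b p : ℤ), by positivity, fun m hm hm' => ?_⟩
    rw [treeIP_node _ _ _ _ _ _ _ _ _ rfl rfl]
    have step : ∀ w₁ ∈ wRange l r m, ∑ w₂ ∈ wRange l r m,
        (wCoeff κ l r m w₁ : ℂ) * (wCoeff κ l r m w₂ : ℂ) *
          (treeIP n o l (m - w₁) l (m - w₂) * treeIP n (o + l.size) r w₁ r w₂) =
        (Cl : ℂ) * Cr * ((wCoeff κ l r m w₁ * wCoeff κ l r m w₁ *
          ((b.choose (m - w₁ - l.rlabel) : ℤ) * (a.choose (w₁ - r.rlabel) : ℤ)) : ℤ) : ℂ) := by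
      intro w₁ hw₁
      rw [Finset.sum_eq_single w₁]
      · rw [wRange, Finset.mem_Icc, max_le_iff, le_min_iff] at hw₁
        rw [hl _ (by omega) (by omega), hr _ (by omega) (by omega)]
        push_cast
        ring
      · intro w₂ _ hne
        rw [treeIP_eq_zero_of_ne (t₁ := r) rfl hne.symm, mul_zero, mul_zero]
      · exact fun h => absurd hw₁ h
    rw [Finset.sum_congr rfl step, ← Finset.mul_sum, ← Int.cast_sum,
      sum_wRange hl2 hr2 (by omega), ← hp, ← ha, ← hb]
    have hself := hahnIP_self (p := p) (a := a) (b := b) (by omega) (by omega) (m - κ)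
    rw [show p + (m - κ) = m - l.rlabel - r.rlabel by omega,
      show a + b - 2 * p = l.size + r.size - 2 * κ by omega] at hself
    rw [hself]
    push_cast
    ring

lemma treeIP_eq_zero (n : ℕ) (t₁ t₂ : BT) (o m : ℕ) (ho : o + t₁.size ≤ n)
    (hs : sameShape t₁ t₂) (hv₁ : t₁.valid) (hv₂ : t₂.valid)
    (h₁ : t₁.rlabel ≤ m) (h₁' : m + t₁.rlabel ≤ t₁.size)
    (h₂ : t₂.rlabel ≤ m) (h₂' : m + t₂.rlabel ≤ t₂.size) (hne : t₁ ≠ t₂) :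
    treeIP n o t₁ m t₂ m = 0 := by
  induction t₁ generalizing t₂ o m with
  | leaf a =>
    cases t₂ with
    | leaf b => exact absurd (congrArg BT.leaf hs) hne
    | node κ l r => exact hs.elim
  | node κ₁ l₁ r₁ ihl ihr =>
    cases t₂ with
    | leaf b => exact hs.elim
    | node κ₂ l₂ r₂ =>
      obtain ⟨hsl, hsr⟩ := hs
      have hel := hsl.size_eq
      have her := hsr.size_eq
      obtain ⟨hvl₁, hvr₁, a1, a2, a3⟩ := hv₁
      obtain ⟨hvl₂, hvr₂, b1, b2, b3⟩ := hv₂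
      have c1 := hvl₁.two_mul_rlabel_le
      have c2 := hvr₁.two_mul_rlabel_le
      have c3 := hvl₂.two_mul_rlabel_le
      have c4 := hvr₂.two_mul_rlabel_le
      simp only [BT.size, BT.rlabel] at ho h₁ h₁' h₂ h₂'
      rw [treeIP_node _ _ _ _ _ _ _ _ _ hel her]
      by_cases hlr : l₁ = l₂ ∧ r₁ = r₂
      · obtain ⟨rfl, rfl⟩ := hlr
        have hκ : κ₁ ≠ κ₂ := fun h => hne (by rw [h])
        obtain ⟨Cl, -, hl⟩ := treeIP_self n l₁ o (by omega) hvl₁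
        obtain ⟨Cr, -, hr⟩ := treeIP_self n r₁ (o + l₁.size) (by omega) hvr₁
        have step : ∀ w₁ ∈ wRange l₁ r₁ m, ∑ w₂ ∈ wRange l₁ r₁ m,
            (wCoeff κ₁ l₁ r₁ m w₁ : ℂ) * (wCoeff κ₂ l₁ r₁ m w₂ : ℂ) *
              (treeIP n o l₁ (m - w₁) l₁ (m - w₂) *
                treeIP n (o + l₁.size) r₁ w₁ r₁ w₂) =
            (Cl : ℂ) * Cr * ((wCoeff κ₁ l₁ r₁ m w₁ * wCoeff κ₂ l₁ r₁ m w₁ *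
              (((l₁.size - 2 * l₁.rlabel).choose (m - w₁ - l₁.rlabel) : ℤ) *
                ((r₁.size - 2 * r₁.rlabel).choose (w₁ - r₁.rlabel) : ℤ)) : ℤ) : ℂ) := by
          intro w₁ hw₁
          rw [Finset.sum_eq_single w₁]
          · rw [wRange, Finset.mem_Icc, max_le_iff, le_min_iff] at hw₁
            rw [hl _ (by omega) (by omega), hr _ (by omega) (by omega)]
            push_cast
            ring
          · intro w₂ _ hne
            rw [treeIP_eq_zero_of_ne (t₁ := r₁) rfl hne.symm, mul_zero, mul_zero]
          · exact fun h => absurd hw₁ h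
        rw [Finset.sum_congr rfl step, ← Finset.mul_sum, ← Int.cast_sum,
          sum_wRange c1 c2 (by omega), hahnIP_eq_zero (by omega) (by omega) (by omega)
            (by omega) (by omega)]
        simp
      · refine Finset.sum_eq_zero fun w₁ hw₁ => Finset.sum_eq_zero fun w₂ hw₂ => ?_
        rw [wRange, Finset.mem_Icc, max_le_iff, le_min_iff] at hw₁ hw₂
        by_cases hw : w₁ = w₂
        · subst hw
          by_cases hll : l₁ = l₂
          · rw [ihr r₂ (o + l₁.size) w₁ (by omega) hsr hvr₁ hvr₂ (by omega) (by omega) (by omega)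
              (by omega) (fun h => hlr ⟨hll, h⟩)]
            ring
          · rw [ihl l₂ o (m - w₁) (by omega) hsl hvl₁ hvl₂ (by omega) (by omega) (by omega)
              (by omega) hll]
            ring
        · rw [treeIP_eq_zero_of_ne (t₁ := r₁) her hw]
          ring

lemma ip_eq_treeIP {n : ℕ} (t₁ t₂ : BT) (m : ℕ) (h : t₁.size = n) :
    ip n (PhiT n t₁ 0 m) (PhiT n t₂ 0 m) = treeIP n 0 t₁ m t₂ m := by
  unfold ip treeIP
  have : block n 0 t₁.size = Finset.univ := by
    have := inter_block_self_of_size h Finset.univ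
    rwa [Finset.univ_inter] at this
  rw [this, Finset.powerset_univ]

/-! ### Invariant functions and block profiles -/

/-- Two subsets meet every block of the tree in equally many points. -/
def sameProfile (n : ℕ) : BT → ℕ → Finset (Fin n) → Finset (Fin n) → Prop
  | .leaf a, o, Z, Z' => (Z ∩ block n o a).card = (Z' ∩ block n o a).card
  | .node _ l r, o, Z, Z' => sameProfile n l o Z Z' ∧ sameProfile n r (o + l.size) Z Z'

lemma sameProfile_equivalence (n : ℕ) (t : BT) (o : ℕ) : Equivalence (sameProfile n t o) := by
  induction t generalizing o with
  | leaf a => exact ⟨fun _ => rfl, fun h => Eq.symm h, fun h h' => Eq.trans h h'⟩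
  | node κ l r ihl ihr =>
    exact ⟨fun Z => ⟨(ihl o).refl Z, (ihr _).refl Z⟩,
      fun h => ⟨(ihl o).symm h.1, (ihr _).symm h.2⟩,
      fun h h' => ⟨(ihl o).trans h.1 h'.1, (ihr _).trans h.2 h'.2⟩⟩

lemma sameProfile.card_eq {n : ℕ} {t : BT} {o : ℕ} {Z Z' : Finset (Fin n)}
    (h : sameProfile n t o Z Z') :
    (Z ∩ block n o t.size).card = (Z' ∩ block n o t.size).card := by
  induction t generalizing o with
  | leaf a => exact h
  | node κ l r ihl ihr =>
    simp only [BT.size]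
    rw [card_inter_block, card_inter_block, ihl h.1, ihr h.2]

/-- The function `PhiT`, extended to all subsets of the ground set by intersecting with the block
of the tree. -/
def PsiT (n : ℕ) (t : BT) (o m : ℕ) (Z : Finset (Fin n)) : ℂ :=
  PhiT n t o m (Z ∩ block n o t.size)

lemma PsiT_node (n κ : ℕ) (l r : BT) (o m : ℕ) (Z : Finset (Fin n)) :
    PsiT n (.node κ l r) o m Z = ∑ w ∈ wRange l r m, (wCoeff κ l r m w : ℂ) *
      PsiT n l o (m - w) Z * PsiT n r (o + l.size) w Z := by
  unfold PsiT
  rw [PhiT_node]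
  simp only [BT.size]
  rw [inter_block_left, inter_block_right]

lemma PsiT_congr {n : ℕ} {t t' : BT} (hs : sameShape t t') {o m : ℕ} {Z Z' : Finset (Fin n)}
    (h : sameProfile n t o Z Z') : PsiT n t' o m Z = PsiT n t' o m Z' := by
  induction t generalizing t' o m with
  | leaf a =>
    cases t' with
    | leaf b =>
      obtain rfl : a = b := hs
      simp only [PsiT, PhiT, BT.size, Finset.inter_subset_right, true_and]
      rw [show (Z ∩ block n o a).card = (Z' ∩ block n o a).card from h]
    | node κ l r => exact hs.elim
  | node κ l r ihl ihr =>
    cases t' with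
    | leaf b => exact hs.elim
    | node κ' l' r' =>
      rw [PsiT_node, PsiT_node]
      refine Finset.sum_congr rfl fun w _ => ?_
      rw [ihl hs.1 h.1, ihr hs.2 (hs.1.size_eq ▸ h.2)]

lemma sameProfile_image {n : ℕ} {t : BT} {o : ℕ} {g : Equiv.Perm (Fin n)}
    (hg : presBlocks n t o g) (Z : Finset (Fin n)) :
    sameProfile n t o (Z.image ⇑g⁻¹) Z := by
  induction t generalizing o with
  | leaf a =>
    have hg' : Finset.image ⇑g (block n o a) = block n o a := hg
    have : Z.image ⇑g⁻¹ ∩ block n o a = (Z ∩ block n o a).image ⇑g⁻¹ := by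
      rw [Finset.image_inter _ _ g⁻¹.injective]
      congr 1
      conv_rhs => rw [← hg', Finset.image_image]
      simp
    change (Z.image ⇑g⁻¹ ∩ block n o a).card = (Z ∩ block n o a).card
    rw [this, Finset.card_image_of_injective _ g⁻¹.injective]
  | node κ l r ihl ihr => exact ⟨ihl hg.1, ihr hg.2⟩

/-- Two maps from a finite set with equal fibre cardinalities differ by a permutation. -/
lemma exists_perm_of_fiber_card {α β : Type*} [Fintype α] [DecidableEq β] (f g : α → β)
    (h : ∀ b, (Finset.univ.filter fun x => f x = b).card =
      (Finset.univ.filter fun x => g x = b).card) :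
    ∃ σ : Equiv.Perm α, ∀ x, g (σ x) = f x := by
  let e : ∀ b, {x // f x = b} ≃ {x // g x = b} := fun b =>
    Fintype.equivOfCardEq (by rw [Fintype.card_subtype, Fintype.card_subtype, h b])
  refine ⟨(Equiv.sigmaFiberEquiv f).symm.trans
    ((Equiv.sigmaCongrRight e).trans (Equiv.sigmaFiberEquiv g)), fun x => ?_⟩
  exact (e (f x) ⟨x, rfl⟩).2

lemma exists_perm_of_card_eq {α : Type*} [Fintype α] [DecidableEq α] {A Z Z' : Finset α}
    (h : (Z ∩ A).card = (Z' ∩ A).card) :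
    ∃ σ : Equiv.Perm α, (∀ x ∉ A, σ x = x) ∧ ∀ x ∈ A, σ x ∈ A ∧ (σ x ∈ Z ↔ x ∈ Z') := by
  classical
  let f : Finset α → α → Bool ⊕ α := fun Y x => if x ∈ A then .inl (decide (x ∈ Y)) else .inr x
  have hc : ∀ Y : Finset α, (Finset.univ.filter fun x => f Y x = .inl true) = Y ∩ A := by
    intro Y; ext x; simp only [f, Finset.mem_filter_univ, Finset.mem_inter]; split_ifs <;> simp_all
  have hc' : ∀ Y : Finset α, (Finset.univ.filter fun x => f Y x = .inl false) = A \ Y := by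
    intro Y; ext x; simp only [f, Finset.mem_filter_univ, Finset.mem_sdiff]; split_ifs <;> simp_all
  obtain ⟨σ, hσ⟩ := exists_perm_of_fiber_card (f Z') (f Z) (by
    rintro ((_ | _) | y)
    · rw [hc', hc', Finset.card_sdiff, Finset.card_sdiff, h]
    · rw [hc, hc, h]
    · congr 1; ext x; simp only [f, Finset.mem_filter_univ]; split_ifs <;> simp)
  refine ⟨σ, fun x hx => ?_, fun x hx => ?_⟩
  · have := hσ x
    simp only [f, hx, if_false] at this
    split_ifs at this
    simpa using this
  · have := hσ x
    simp only [f, hx, if_true] at this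
    split_ifs at this with h1
    exact ⟨h1, by simpa using this⟩

lemma presBlocks_of_fixed {n : ℕ} {t : BT} {o : ℕ} {g : Equiv.Perm (Fin n)}
    (h : ∀ x ∈ block n o t.size, g x = x) : presBlocks n t o g := by
  induction t generalizing o with
  | leaf a =>
    change Finset.image ⇑g (block n o a) = block n o a
    simp only [BT.size] at h
    rw [Finset.image_congr (g := id) fun x hx => h x hx, Finset.image_id]
  | node κ l r ihl ihr =>
    simp only [BT.size, ← block_union] at h
    exact ⟨ihl fun x hx => h x (Finset.mem_union_left _ hx),
      ihr fun x hx => h x (Finset.mem_union_right _ hx)⟩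

lemma presBlocks_mul {n : ℕ} {t : BT} {o : ℕ} {g g' : Equiv.Perm (Fin n)}
    (h : presBlocks n t o g) (k : presBlocks n t o g') : presBlocks n t o (g * g') := by
  induction t generalizing o with
  | leaf a =>
    change Finset.image ⇑g (block n o a) = block n o a at h
    change Finset.image ⇑g' (block n o a) = block n o a at k
    change Finset.image ⇑(g * g') (block n o a) = block n o a
    rw [Equiv.Perm.coe_mul, ← Finset.image_image, k, h]
  | node κ l r ihl ihr => exact ⟨ihl h.1 k.1, ihr h.2 k.2⟩

/-- The Young subgroup acts transitively on the subsets with a given profile. -/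
lemma exists_perm_of_sameProfile {n : ℕ} {t : BT} {o : ℕ} {Z Z' : Finset (Fin n)}
    (h : sameProfile n t o Z Z') :
    ∃ g : Equiv.Perm (Fin n), presBlocks n t o g ∧ (∀ x ∉ block n o t.size, g x = x) ∧
      ∀ x ∈ block n o t.size, g x ∈ block n o t.size ∧ (g x ∈ Z ↔ x ∈ Z') := by
  induction t generalizing o with
  | leaf a =>
    obtain ⟨σ, h1, h2⟩ := exists_perm_of_card_eq (A := block n o a) h
    refine ⟨σ, ?_, h1, h2⟩
    change Finset.image ⇑σ (block n o a) = block n o a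
    refine Finset.eq_of_subset_of_card_le ?_ (Finset.card_image_of_injective _ σ.injective).ge
    intro y hy
    obtain ⟨x, hx, rfl⟩ := Finset.mem_image.1 hy
    exact (h2 x hx).1
  | node κ l r ihl ihr =>
    obtain ⟨g, hg1, hg2, hg3⟩ := ihl h.1
    obtain ⟨g', hg1', hg2', hg3'⟩ := ihr h.2
    have hd := Finset.disjoint_left.1 (block_disjoint n o l.size r.size)
    have hd' := Finset.disjoint_right.1 (block_disjoint n o l.size r.size)
    refine ⟨g * g', ⟨presBlocks_mul hg1 (presBlocks_of_fixed fun x hx => hg2' x (hd hx)),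
      presBlocks_mul (presBlocks_of_fixed fun x hx => hg2 x (hd' hx)) hg1'⟩, ?_, ?_⟩
    · intro x hx
      simp only [BT.size, ← block_union, Finset.mem_union, not_or] at hx
      rw [Equiv.Perm.mul_apply, hg2' x hx.2, hg2 x hx.1]
    · intro x hx
      simp only [BT.size, ← block_union, Finset.mem_union] at hx ⊢
      rw [Equiv.Perm.mul_apply]
      rcases hx with hx | hx
      · rw [hg2' x (hd hx)]
        exact ⟨Or.inl (hg3 x hx).1, (hg3 x hx).2⟩
      · rw [hg2 _ (hd' (hg3' x hx).1)]
        have hr := hg3' x hx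
        exact ⟨Or.inr hr.1, hr.2⟩

/-! ### Spanning -/

/-- The functions attached to the labelings of the tree `t` (placed at offset `o`) whose root label
is at most `min {m, N - m}`, where `N` is the size of `t`. -/
def psiSet (n : ℕ) (t : BT) (o m : ℕ) : Set (Finset (Fin n) → ℂ) :=
  {F | ∃ T : BT, sameShape t T ∧ T.valid ∧ T.rlabel ≤ min m (t.size - m) ∧ F = PsiT n T o m}

/-- The Clebsch–Gordan step: a product of tree functions of the two sons is a combination of tree
functions of the father, by completeness of the Hahn polynomials. -/
lemma mul_mem_span {n κ₀ : ℕ} {l r : BT} {o m₁ m₂ : ℕ} (hm₁ : m₁ ≤ l.size) (hm₂ : m₂ ≤ r.size)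
    {F G : Finset (Fin n) → ℂ} (hF : F ∈ psiSet n l o m₁) (hG : G ∈ psiSet n r (o + l.size) m₂) :
    F * G ∈ Submodule.span ℂ (psiSet n (.node κ₀ l r) o (m₁ + m₂)) := by
  obtain ⟨l', hsl, hvl, hkl, rfl⟩ := hF
  obtain ⟨r', hsr, hvr, hkr, rfl⟩ := hG
  have c1 := hvl.two_mul_rlabel_le
  have c2 := hvr.two_mul_rlabel_le
  have e1 := hsl.size_eq
  have e2 := hsr.size_eq
  rw [le_min_iff] at hkl hkr
  set m := m₁ + m₂ with hm
  set i := l'.rlabel with hi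
  set j := r'.rlabel with hj
  set a := r'.size - 2 * j with ha
  set b := l'.size - 2 * i with hb
  set c := m - i - j with hc
  obtain ⟨β, hβ⟩ := hahn_complete (a := a) (b := b) (c := c) (x := m₂ - j) (by omega) (by omega)
    (by omega)
  have hmem : m₂ ∈ wRange l' r' m := by
    rw [wRange, Finset.mem_Icc, max_le_iff, le_min_iff]
    omega
  have key : PsiT n l' o m₁ * PsiT n r' (o + l.size) m₂ =
      ∑ p ∈ Finset.range (min (min a b) (min c (a + b - c)) + 1),
        β p • PsiT n (.node (p + i + j) l' r') o m := by
    ext Z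
    simp only [Pi.mul_apply, Finset.sum_apply, Pi.smul_apply, smul_eq_mul, PsiT_node,
      Finset.mul_sum]
    rw [Finset.sum_comm]
    have step : ∀ w ∈ wRange l' r' m,
        ∑ p ∈ Finset.range (min (min a b) (min c (a + b - c)) + 1),
          β p * ((wCoeff (p + i + j) l' r' m w : ℂ) * PsiT n l' o (m - w) Z *
            PsiT n r' (o + l'.size) w Z) =
        if w = m₂ then PsiT n l' o (m - w) Z * PsiT n r' (o + l'.size) w Z else 0 := by
      intro w hw
      have hw' := hw
      rw [wRange, Finset.mem_Icc, max_le_iff, le_min_iff] at hw'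
      have h := hβ (w - j) (by omega) (by omega) (by omega)
      have e : ∀ p, ((wCoeff (p + i + j) l' r' m w : ℤ) : ℂ) =
          ((hahnXY p a b (w - j : ℕ) ((c - (w - j) : ℕ) : ℤ) : ℤ) : ℂ) := by
        intro p
        rw [wCoeff_eq c1 c2 (by omega) hw, ← hi, ← hj, ← ha, ← hb,
          show p + i + j - i - j = p by omega, show m - w - i = c - (w - j) by omega]
      trans (if w - j = m₂ - j then (1 : ℂ) else 0) *
        (PsiT n l' o (m - w) Z * PsiT n r' (o + l'.size) w Z)
      · rw [← h, Finset.sum_mul]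
        refine Finset.sum_congr rfl fun p _ => ?_
        rw [e]; ring
      · rw [ite_zero_mul, one_mul]
        exact if_congr (by omega) rfl rfl
    rw [Finset.sum_congr rfl step, Finset.sum_ite_eq', if_pos hmem, hm, Nat.add_sub_cancel, e1]
  rw [key]
  refine Submodule.sum_mem _ fun p hp => Submodule.smul_mem _ _ (Submodule.subset_span ?_)
  rw [Finset.mem_range] at hp
  refine ⟨.node (p + i + j) l' r', ⟨hsl, hsr⟩, ⟨hvl, hvr, ?_, ?_, ?_⟩, ?_, rfl⟩
  · omega
  · omega
  · omega
  · simp only [BT.rlabel, BT.size]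
    omega

open Classical in
/-- Indicator functions of profiles are spanned by tree functions. -/
lemma indicator_mem_span (n : ℕ) (t : BT) (o : ℕ) (ho : o + t.size ≤ n) (Z₀ : Finset (Fin n)) :
    (fun Z => if sameProfile n t o Z₀ Z then (1 : ℂ) else 0) ∈
      Submodule.span ℂ (psiSet n t o (Z₀ ∩ block n o t.size).card) := by
  have hcard : ∀ {o' a : ℕ}, o' + a ≤ n → (Z₀ ∩ block n o' a).card ≤ a := fun h =>
    (Finset.card_le_card Finset.inter_subset_right).trans (card_block h).le
  induction t generalizing o with
  | leaf a =>
    refine Submodule.subset_span ⟨.leaf a, rfl, trivial, Nat.zero_le _, ?_⟩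
    ext Z
    have h : sameProfile n (.leaf a) o Z₀ Z ↔
        Z ∩ block n o a ⊆ block n o a ∧
          (Z ∩ block n o a).card = (Z₀ ∩ block n o a).card :=
      ⟨fun h => ⟨Finset.inter_subset_right, Eq.symm h⟩, fun h => h.2.symm⟩
    exact if_congr h rfl rfl
  | node κ l r ihl ihr =>
    simp only [BT.size] at ho ⊢
    have h := Submodule.mul_mem_mul (ihl o (by omega)) (ihr (o + l.size) (by omega))
    rw [Submodule.span_mul_span] at h
    have e : (fun Z => if sameProfile n (.node κ l r) o Z₀ Z then (1 : ℂ) else 0) =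
        (fun Z => if sameProfile n l o Z₀ Z then (1 : ℂ) else 0) *
        (fun Z => if sameProfile n r (o + l.size) Z₀ Z then (1 : ℂ) else 0) := by
      ext Z
      have h : sameProfile n (.node κ l r) o Z₀ Z ↔
          sameProfile n l o Z₀ Z ∧ sameProfile n r (o + l.size) Z₀ Z := Iff.rfl
      by_cases h1 : sameProfile n l o Z₀ Z <;>
        by_cases h2 : sameProfile n r (o + l.size) Z₀ Z <;> simp [h, h1, h2]
    rw [e, card_inter_block]
    refine Submodule.span_le.2 ?_ h
    rintro _ ⟨F, hF, G, hG, rfl⟩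
    exact mul_mem_span (hcard (by omega)) (hcard (by omega)) hF hG

/-- Corollary 3.9: the functions `Φ(T(a), m, T_r(k))`, as `T_r(k)` ranges over all
representation labelings with root label `k ≤ min{m, n-m}`, form an orthogonal basis of the
space of `S_a`-invariant functions in `M^{n-m,m}`. -/
theorem stmt13 (n : ℕ) (hn : 1 ≤ n) (t : BT) (hleaves : 2 ≤ t.nleaves)
    (hsize : t.size = n) (hpos : t.posParts) (m : ℕ) (hm : m ≤ n) :
    (∀ t' : BT, sameShape t t' → t'.valid → t'.rlabel ≤ min m (n - m) →
      PhiT n t' 0 m ≠ 0) ∧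
    (∀ t₁ t₂ : BT, sameShape t t₁ → t₁.valid → t₁.rlabel ≤ min m (n - m) →
      sameShape t t₂ → t₂.valid → t₂.rlabel ≤ min m (n - m) → t₁ ≠ t₂ →
      ip n (PhiT n t₁ 0 m) (PhiT n t₂ 0 m) = 0) ∧
    (∀ f : Finset (Fin n) → ℂ,
      f ∈ Submodule.span ℂ {F : Finset (Fin n) → ℂ |
          ∃ t' : BT, sameShape t t' ∧ t'.valid ∧ t'.rlabel ≤ min m (n - m) ∧
            F = PhiT n t' 0 m} ↔
        ((∀ s : Finset (Fin n), s.card ≠ m → f s = 0) ∧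
          ∀ g : Equiv.Perm (Fin n), presBlocks n t 0 g → permAct n g f = f)) := by
  have hPsi : ∀ t', sameShape t t' → PsiT n t' 0 m = PhiT n t' 0 m := by
    intro t' hs
    ext Z
    rw [PsiT, inter_block_self_of_size (hs.size_eq.symm.trans hsize)]
  refine ⟨?_, ?_, ?_⟩
  · intro t' hs hv hk h0
    have hst := hs.size_eq.symm.trans hsize
    obtain ⟨C, hC, h⟩ := treeIP_self n t' 0 (by omega) hv
    have h2 := h m (by omega) (by omega)
    have h3 : 0 < (t'.size - 2 * t'.rlabel).choose (m - t'.rlabel) := Nat.choose_pos (by omega)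
    rw [← ip_eq_treeIP t' t' m hst, h0] at h2
    have h4 : ip n 0 0 = 0 := by simp [ip]
    rw [h4] at h2
    rcases mul_eq_zero.1 h2.symm with h5 | h5
    · exact hC.ne' (by exact_mod_cast h5)
    · exact h3.ne' (by exact_mod_cast h5)
  · intro t₁ t₂ hs₁ hv₁ hk₁ hs₂ hv₂ hk₂ hne
    have e₁ := hs₁.size_eq.symm.trans hsize
    have e₂ := hs₂.size_eq.symm.trans hsize
    rw [ip_eq_treeIP t₁ t₂ m e₁]
    exact treeIP_eq_zero n t₁ t₂ 0 m (by omega) (hs₁.symm.trans hs₂) hv₁ hv₂ (by omega)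
      (by omega) (by omega) (by omega) hne
  · intro f
    constructor
    · intro hf
      induction hf using Submodule.span_induction with
      | mem F hF =>
        obtain ⟨t', hs, hv, hk, rfl⟩ := hF
        refine ⟨fun s hcard => PhiT_eq_zero n t' 0 m s ?_, fun g hg => ?_⟩
        · rwa [inter_block_self_of_size (hs.size_eq.symm.trans hsize)]
        · rw [← hPsi t' hs]
          ext Z
          exact PsiT_congr hs (sameProfile_image hg Z)
      | zero => exact ⟨fun _ _ => rfl, fun _ _ => rfl⟩
      | add F G _ _ hF hG =>
        refine ⟨fun s hs => ?_, fun g hg => ?_⟩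
        · rw [Pi.add_apply, hF.1 s hs, hG.1 s hs, add_zero]
        · ext Z
          exact congrArg₂ (· + ·) (congrFun (hF.2 g hg) Z) (congrFun (hG.2 g hg) Z)
      | smul c F _ hF =>
        refine ⟨fun s hs => ?_, fun g hg => ?_⟩
        · rw [Pi.smul_apply, hF.1 s hs, smul_zero]
        · ext Z
          exact congrArg (c • ·) (congrFun (hF.2 g hg) Z)
    · rintro ⟨hsupp, hinv⟩
      classical
      have hset : {F : Finset (Fin n) → ℂ | ∃ t' : BT, sameShape t t' ∧ t'.valid ∧
          t'.rlabel ≤ min m (n - m) ∧ F = PhiT n t' 0 m} = psiSet n t 0 m := by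
        ext F
        simp only [psiSet, Set.mem_ofPred_eq, hsize]
        refine exists_congr fun t' => and_congr_right fun hs => ?_
        rw [hPsi t' hs]
      rw [hset]
      have heq := sameProfile_equivalence n t 0
      -- An invariant function is constant on profile classes.
      have hconst : ∀ Z Z', sameProfile n t 0 Z Z' → f Z = f Z' := by
        intro Z Z' h
        obtain ⟨g, hg, -, hg2⟩ := exists_perm_of_sameProfile h
        have h1 := congrFun (hinv g hg) Z
        rw [permAct] at h1
        rw [← h1]
        congr 1
        ext x
        rw [Finset.mem_image]
        have hx : x ∈ block n 0 t.size := by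
          rw [mem_block]; have := x.2; omega
        rw [← (hg2 x hx).2]
        constructor
        · rintro ⟨y, hy, rfl⟩
          simpa using hy
        · intro h
          exact ⟨g x, h, by simp⟩
      -- Write `f` as a combination of indicators of profile classes; each class occurs once for
      -- each of its members, hence the division by its cardinality.
      let cls : Finset (Fin n) → Finset (Finset (Fin n)) := fun Z₀ =>
        Finset.univ.filter fun Z => sameProfile n t 0 Z₀ Z
      have hf : f = ∑ Z₀ : Finset (Fin n), (f Z₀ / (cls Z₀).card) •
          (fun Z => if sameProfile n t 0 Z₀ Z then (1 : ℂ) else 0) := by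
        ext Z
        simp only [Finset.sum_apply, Pi.smul_apply, smul_eq_mul, mul_ite, mul_one, mul_zero]
        rw [← Finset.sum_filter]
        have h1 : (Finset.univ.filter fun Z₀ => sameProfile n t 0 Z₀ Z) = cls Z := by
          ext Z₀
          simp only [cls, Finset.mem_filter_univ]
          exact ⟨heq.symm, heq.symm⟩
        have h2 : ∀ Z₀ ∈ cls Z, f Z₀ / ((cls Z₀).card : ℂ) = f Z / ((cls Z).card : ℂ) := by
          intro Z₀ h
          simp only [cls, Finset.mem_filter_univ] at h
          have h3 : cls Z₀ = cls Z := by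
            ext Y
            simp only [cls, Finset.mem_filter_univ]
            exact ⟨fun h' => heq.trans h h', fun h' => heq.trans (heq.symm h) h'⟩
          rw [h3, hconst Z Z₀ h]
        rw [h1, Finset.sum_congr rfl h2, Finset.sum_const, nsmul_eq_mul]
        have h4 : ((cls Z).card : ℂ) ≠ 0 := by
          rw [Nat.cast_ne_zero]
          exact Finset.card_ne_zero_of_mem (a := Z) (by
            simp only [cls, Finset.mem_filter_univ]; exact heq.refl Z)
        field_simp
      rw [hf]
      refine Submodule.sum_mem _ fun Z₀ _ => ?_
      by_cases hZ : Z₀.card = m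
      · have h := indicator_mem_span n t 0 (by omega) Z₀
        rw [inter_block_self_of_size hsize, hZ] at h
        exact Submodule.smul_mem _ _ h
      · rw [hsupp Z₀ hZ, zero_div, zero_smul]
        exact Submodule.zero_mem _
end
end

section
/- For all integers m, a, b, c, x with 0 ≤ c ≤ a+b, 0 ≤ m ≤ min{a, b, c, a+b−c}, and max{c−b, 0} ≤ x ≤ min{a, c}: E_m(a,b,c,x) = (−1)^{a−x} · (m!·(c−x)!·(b−c+x)!) / ((a+b−c−m)!·(c−m)!·(a−m)!) · E_{a−m}(a, a+b−2m, a+b−m−c+x, x). (All factorial arguments appearing are nonnegative under the stated constraints.) -/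
/-!
Stripping the factorials, each summand of `E_m(a,b,c,x)` becomes a product of binomial
coefficients times a factor independent of `j` (`hahnE_eq`). With `g = b - m` and `N = c - m`
the Regge symmetry reduces to

  `∑_j (-1)^j C(g+j,j) C(a-j,m-j) C(N,x-j) = (-1)^x ∑_k (-1)^k C(g+k,k) C(a-k,m) C(g+x-N,x-k)`,

which is `core`. To prove it, write `C(a-j,m-j) = ∑_k (-1)^k C(j,k) C(a-k,m)`, a `j`-th
difference (`alt_diff`), exchange the two sums, use
`C(g+j,j) C(j,k) = C(g+k,k) C(g+j,j-k)`, and evaluate the inner sum over `j` by the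
Vandermonde convolution with a negative upper argument (`alt_vandermonde`).
-/

open Finset

noncomputable section

/-- Alternating Vandermonde convolution; it is the identity
`(1+z)^(-g-1) * (1+z)^N = (1+z)^(N-g-1)` read off in degree `X`. -/
theorem alt_vandermonde (g N : ℕ) : ∀ X : ℕ, N ≤ g + X →
    ∑ i ∈ range (X + 1), (-1 : ℚ) ^ i * ((g + i).choose i : ℚ) * (N.choose (X - i) : ℚ) =
      (-1) ^ X * ((g + X - N).choose X : ℚ) := by
  induction N with
  | zero =>
    intro X _
    rw [sum_range_succ, sum_eq_zero]
    · simp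
    · intro i hi
      have : 0 < X - i := by have := mem_range.1 hi; omega
      rw [Nat.choose_eq_zero_of_lt this]; simp
  | succ N ih =>
    intro X hX
    cases X with
    | zero => simp
    | succ X =>
      have h1 := ih (X + 1) (by omega)
      have h2 := ih X (by omega)
      rw [sum_range_succ] at h1 ⊢
      have h3 : ∀ i ∈ range (X + 1),
          (-1 : ℚ) ^ i * ((g + i).choose i : ℚ) * ((N + 1).choose (X + 1 - i) : ℚ) =
          (-1 : ℚ) ^ i * ((g + i).choose i : ℚ) * (N.choose (X - i) : ℚ) +
          (-1 : ℚ) ^ i * ((g + i).choose i : ℚ) * (N.choose (X + 1 - i) : ℚ) := by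
        intro i hi
        have : X + 1 - i = (X - i) + 1 := by have := mem_range.1 hi; omega
        rw [this, Nat.choose_succ_succ]; push_cast; ring
      rw [sum_congr rfl h3, sum_add_distrib, h2]
      have h4 : g + (X + 1) - N = (g + X - N) + 1 := by omega
      have h5 : g + (X + 1) - (N + 1) = g + X - N := by omega
      rw [h4, Nat.choose_succ_succ] at h1
      rw [h5]
      simp only [Nat.sub_self, Nat.choose_zero_right] at h1 ⊢
      push_cast at h1 ⊢
      rw [pow_succ] at h1 ⊢
      linear_combination h1

/-- The `j`-th backward difference of a binomial coefficient in its upper argument. -/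
theorem alt_diff (j : ℕ) : ∀ n m : ℕ,
    ∑ k ∈ range (j + 1), (-1 : ℚ) ^ k * (j.choose k : ℚ) * ((n + j - k).choose m : ℚ) =
      if j ≤ m then (n.choose (m - j) : ℚ) else 0 := by
  induction j with
  | zero => intro n m; simp
  | succ j ih =>
    intro n m
    have h1 := ih (n + 1) m
    have h2 := ih n m
    have h3 : ∑ k ∈ range (j + 1 + 1),
        (-1 : ℚ) ^ k * ((j + 1).choose k : ℚ) * ((n + (j + 1) - k).choose m : ℚ) =
        ∑ k ∈ range (j + 1), (-1 : ℚ) ^ k * (j.choose k : ℚ) * ((n + 1 + j - k).choose m : ℚ) -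
        ∑ k ∈ range (j + 1), (-1 : ℚ) ^ k * (j.choose k : ℚ) * ((n + j - k).choose m : ℚ) := by
      have h4 : ∑ k ∈ range (j + 1),
          (-1 : ℚ) ^ k * (j.choose k : ℚ) * ((n + 1 + j - k).choose m : ℚ) =
          ∑ k ∈ range (j + 1 + 1),
          (-1 : ℚ) ^ k * (j.choose k : ℚ) * ((n + 1 + j - k).choose m : ℚ) := by
        rw [sum_range_succ _ (j + 1)]; simp
      rw [h4, sum_range_succ', sum_range_succ' _ (j + 1)]
      rw [add_sub_right_comm, ← sum_sub_distrib]
      congr 1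
      · apply sum_congr rfl
        intro k _
        have e1 : n + (j + 1) - (k + 1) = n + j - k := by omega
        have e2 : n + 1 + j - (k + 1) = n + j - k := by omega
        rw [e1, e2, Nat.choose_succ_succ, pow_succ]; push_cast; ring
      · simp [add_comm, add_left_comm]
    rw [h3, h1, h2]
    rcases lt_trichotomy m j with h | h | h
    · rw [if_neg (by omega), if_neg (by omega), if_neg (by omega)]; simp
    · subst h; simp
    · rw [if_pos (by omega), if_pos (by omega), if_pos (by omega)]
      have : m - j = (m - (j + 1)) + 1 := by omega
      rw [this, Nat.choose_succ_succ']; push_cast; ring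

/-- The Regge symmetry after all factorial prefactors have been stripped. Writing
`C(a-j, m-j)` as a `j`-th difference and exchanging the sums, the inner sum is an instance of
`alt_vandermonde`. -/
theorem core (a m x N g : ℕ) (hx : x ≤ a) (hN : N ≤ g + x) :
    ∑ j ∈ range (x + 1), (-1 : ℚ) ^ j * ((g + j).choose j : ℚ) *
        (if j ≤ m then ((a - j).choose (m - j) : ℚ) else 0) * (N.choose (x - j) : ℚ) =
      (-1) ^ x * ∑ k ∈ range (x + 1), (-1 : ℚ) ^ k * ((g + k).choose k : ℚ) *
        ((a - k).choose m : ℚ) * ((g + x - N).choose (x - k) : ℚ) := by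
  have h1 : ∀ j ∈ range (x + 1), (-1 : ℚ) ^ j * ((g + j).choose j : ℚ) *
        (if j ≤ m then ((a - j).choose (m - j) : ℚ) else 0) * (N.choose (x - j) : ℚ) =
      ∑ k ∈ range (j + 1), (-1 : ℚ) ^ (j + k) * ((g + j).choose j : ℚ) * (j.choose k : ℚ) *
        ((a - k).choose m : ℚ) * (N.choose (x - j) : ℚ) := by
    intro j hj
    have hj := mem_range.1 hj
    rw [← alt_diff j (a - j) m, mul_sum, sum_mul]
    apply sum_congr rfl
    intro k _
    have : a - j + j - k = a - k := by omega
    rw [this, pow_add]; ring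
  rw [sum_congr rfl h1, mul_sum]
  rw [sum_comm' (t' := range (x + 1)) (s' := fun k => Ico k (x + 1))
    (by intro j k; simp only [mem_range, mem_Ico]; omega)]
  apply sum_congr rfl
  intro k hk
  have hk := mem_range.1 hk
  rw [sum_Ico_eq_sum_range]
  have e : x + 1 - k = (x - k) + 1 := by omega
  have hv := alt_vandermonde (g + k) N (x - k) (by omega)
  have e2 : g + k + (x - k) = g + x := by omega
  rw [e2] at hv
  have hs : (-1 : ℚ) ^ x = (-1) ^ k * (-1) ^ (x - k) := by rw [← pow_add]; congr 1; omega
  have hkk : (-1 : ℚ) ^ k * (-1) ^ k = 1 := by rw [← mul_pow]; simp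
  have hr : (-1 : ℚ) ^ x * ((-1 : ℚ) ^ k * ((g + k).choose k : ℚ) *
        ((a - k).choose m : ℚ) * ((g + x - N).choose (x - k) : ℚ)) =
      ((g + k).choose k : ℚ) * ((a - k).choose m : ℚ) *
        ((-1) ^ (x - k) * ((g + x - N).choose (x - k) : ℚ)) := by
    rw [hs]; linear_combination ((g + k).choose k : ℚ) * ((a - k).choose m : ℚ) *
        ((-1) ^ (x - k) * ((g + x - N).choose (x - k) : ℚ)) * hkk
  rw [hr, ← hv, mul_sum, e]
  apply sum_congr rfl
  intro i _
  -- trinomial revision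
  have ht : ((g + (k + i)).choose (k + i) : ℚ) * ((k + i).choose k : ℚ) =
      ((g + k).choose k : ℚ) * ((g + k + i).choose i : ℚ) := by
    have hA := Nat.add_choose_mul_factorial_mul_factorial g (k + i)
    have hB := Nat.add_choose_mul_factorial_mul_factorial k i
    have hC := Nat.add_choose_mul_factorial_mul_factorial g k
    have hD := Nat.add_choose_mul_factorial_mul_factorial (g + k) i
    rw [← Nat.choose_symm_add] at hB
    rw [← add_assoc] at hA
    have hf : (k.factorial * i.factorial * g.factorial : ℚ) ≠ 0 := by positivity
    apply mul_right_cancel₀ hf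
    rw [← add_assoc]
    have hA' := congrArg (Nat.cast (R := ℚ)) hA
    have hB' := congrArg (Nat.cast (R := ℚ)) hB
    have hC' := congrArg (Nat.cast (R := ℚ)) hC
    have hD' := congrArg (Nat.cast (R := ℚ)) hD
    push_cast at hA' hB' hC' hD'
    linear_combination ((g + k + i).choose (k + i) : ℚ) * g.factorial * hB' + hA' - hD' -
      ((g + k + i).choose i : ℚ) * i.factorial * hC'
  have e3 : x - (k + i) = x - k - i := by omega
  have e4 : (-1 : ℚ) ^ (k + i + k) = (-1) ^ i := by
    rw [pow_add, pow_add]; linear_combination (-1 : ℚ) ^ i * hkk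
  rw [e3, e4]
  linear_combination (-1 : ℚ) ^ i * ((a - k).choose m : ℚ) * (N.choose (x - k - i) : ℚ) * ht

theorem poch_asc (n p : ℕ) : poch ((n : ℤ) + 1) p = ((n + 1).ascFactorial p : ℤ) := by
  rw [poch, Nat.ascFactorial_eq_prod_range]; push_cast; rfl

theorem poch_neg (n p : ℕ) : poch (-(n : ℤ)) p = (-1) ^ p * (n.descFactorial p : ℤ) := by
  induction p with
  | zero => simp [poch]
  | succ p ih =>
    rw [poch, prod_range_succ]
    change poch (-(n : ℤ)) p * _ = _
    rw [ih, Nat.descFactorial_succ]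
    rcases le_or_gt p n with h | h
    · push_cast [h]; rw [pow_succ]; ring
    · rw [Nat.descFactorial_of_lt h]; simp

/-- One summand of `hahnE`, for upper parameters `a`, `g + m`, `x + d`, with its factorials
collected into the prefactor that does not depend on `j`. -/
theorem term_eq (m a g d x j : ℕ) (hma : m ≤ a) (hmd : m ≤ x + d) (hjx : j ≤ x) :
    (((-1) ^ j * (m.choose j : ℤ) * poch ((g + m : ℤ) - m + 1) j * poch (-(x : ℤ)) j *
      poch ((a : ℤ) - m + 1) (m - j) * poch ((x : ℤ) - (x + d)) (m - j) : ℤ) : ℚ) =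
    ((-1) ^ m * m.factorial * x.factorial * d.factorial / (x + d - m).factorial) *
      ((-1 : ℚ) ^ j * ((g + j).choose j : ℚ) *
        (if j ≤ m then ((a - j).choose (m - j) : ℚ) else 0) * ((x + d - m).choose (x - j) : ℚ)) := by
  split_ifs with hjm
  · obtain ⟨p, rfl⟩ := Nat.exists_eq_add_of_le hjm
    obtain ⟨q, rfl⟩ := Nat.exists_eq_add_of_le hma
    have e1 : ((g + (j + p : ℕ) : ℤ) - (j + p : ℕ) + 1) = (g : ℤ) + 1 := by ring
    have e2 : (((j + p + q : ℕ) : ℤ) - (j + p : ℕ) + 1) = (q : ℤ) + 1 := by push_cast; ring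
    have e3 : ((x : ℤ) - (x + d)) = -(d : ℤ) := by ring
    have e4 : j + p - j = p := by omega
    have e5 : j + p + q - j = q + p := by omega
    rw [e1, e2, e3, e4, e5, poch_asc, poch_neg, poch_asc, poch_neg,
      Nat.ascFactorial_eq_factorial_mul_choose, Nat.ascFactorial_eq_factorial_mul_choose,
      Nat.descFactorial_eq_factorial_mul_choose x]
    obtain ⟨y, rfl⟩ := Nat.exists_eq_add_of_le hjx
    rcases le_or_gt p d with hpd | hpd
    · obtain ⟨r, rfl⟩ := Nat.exists_eq_add_of_le hpd
      have e6 : j + y + (p + r) - (j + p) = y + r := by omega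
      have e7 : j + y - j = y := by omega
      rw [e6, e7, Nat.descFactorial_eq_factorial_mul_choose]
      have c1 := Nat.add_choose_mul_factorial_mul_factorial j p
      have c2 := Nat.add_choose_mul_factorial_mul_factorial j y
      have c3 := Nat.add_choose_mul_factorial_mul_factorial p r
      have c4 := Nat.add_choose_mul_factorial_mul_factorial y r
      rw [← Nat.choose_symm_add] at c1 c2 c3 c4
      have c4pos : ((y + r).choose y : ℚ) ≠ 0 :=
        Nat.cast_ne_zero.2 (Nat.choose_pos (by omega)).ne'
      have f1 := (Nat.cast_ne_zero (R := ℚ)).2 (Nat.factorial_ne_zero y)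
      have f2 := (Nat.cast_ne_zero (R := ℚ)).2 (Nat.factorial_ne_zero r)
      rw [← c1, ← c2, ← c3, ← c4]
      push_cast
      field_simp
      ring
    · rw [Nat.descFactorial_of_lt hpd, Nat.choose_eq_zero_of_lt (by omega : j + y + d - (j + p) < j + y - j)]
      simp
  · rw [Nat.choose_eq_zero_of_lt (by omega)]; simp

/-- `hahnE` as a full sum over `0 ≤ j ≤ x` of products of binomial coefficients. -/
theorem hahnE_eq_s17 (m a g d x : ℕ) (hma : m ≤ a) (hmd : m ≤ x + d) :
    (hahnE m a (g + m) (x + d) x : ℚ) =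
    ((-1) ^ m * m.factorial * x.factorial * d.factorial / (x + d - m).factorial) *
      ∑ j ∈ range (x + 1), ((-1 : ℚ) ^ j * ((g + j).choose j : ℚ) *
        (if j ≤ m then ((a - j).choose (m - j) : ℚ) else 0) *
          ((x + d - m).choose (x - j) : ℚ)) := by
  rw [mul_sum, ← sum_congr rfl fun j hj =>
    term_eq m a g d x j hma hmd (by have := mem_range.1 hj; omega), ← Int.cast_sum, hahnE]
  congr 1
  apply sum_of_injOn Int.toNat
  · intro i hi j hj h
    simp only [coe_Icc, Set.mem_Icc] at hi hj
    omega
  · intro i hi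
    simp only [coe_Icc, Set.mem_Icc] at hi
    simp only [coe_range, Set.mem_Iio]
    omega
  · -- The summands outside the summation interval of `hahnE` vanish.
    intro j hj hn
    have hj := mem_range.1 hj
    have hn' : (j : ℤ) ∉ Icc (max 0 ((x : ℤ) - (x + d) + m)) (min (m : ℤ) x) := fun h =>
      hn ⟨(j : ℤ), h, by simp⟩
    simp only [mem_Icc] at hn'
    rcases lt_or_ge m j with h | h
    · rw [Nat.choose_eq_zero_of_lt h]; simp
    · have e : ((x : ℤ) - (x + d)) = -(d : ℤ) := by ring
      rw [e, poch_neg d, Nat.descFactorial_of_lt (by omega)]; simp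
  · intro i _
    rfl

/-- Regge symmetry: `E_m(a,b,c,x) = (-1)^{a-x} (m!(c-x)!(b-c+x)!)/((a+b-c-m)!(c-m)!(a-m)!)
· E_{a-m}(a, a+b-2m, a+b-m-c+x, x)`. -/
theorem stmt17 (m : ℕ) (a b c x : ℤ) (hc0 : 0 ≤ c) (hcab : c ≤ a + b)
    (hma : (m : ℤ) ≤ a) (hmb : (m : ℤ) ≤ b) (hmc : (m : ℤ) ≤ c)
    (hmabc : (m : ℤ) ≤ a + b - c)
    (hx1 : c - b ≤ x) (hx2 : 0 ≤ x) (hx3 : x ≤ a) (hx4 : x ≤ c) :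
    (hahnE m a b c x : ℚ) =
      (-1) ^ (a - x).toNat *
        ((m.factorial : ℚ) * ((c - x).toNat.factorial : ℚ) *
          ((b - c + x).toNat.factorial : ℚ)) /
        (((a + b - c - m).toNat.factorial : ℚ) * ((c - m).toNat.factorial : ℚ) *
          ((a - m).toNat.factorial : ℚ)) *
        (hahnE (a - m).toNat a (a + b - 2 * m) (a + b - m - c + x) x : ℚ) := by
  lift x to ℕ using hx2
  obtain ⟨p, hp⟩ := Int.eq_ofNat_of_zero_le (sub_nonneg.2 hma)
  obtain ⟨g, hg⟩ := Int.eq_ofNat_of_zero_le (sub_nonneg.2 hmb)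
  obtain ⟨d, hd⟩ := Int.eq_ofNat_of_zero_le (sub_nonneg.2 hx4)
  obtain ⟨d', hd'⟩ := Int.eq_ofNat_of_zero_le (sub_nonneg.2 hmabc)
  obtain rfl : a = ((m + p : ℕ) : ℤ) := by push_cast; linarith
  obtain rfl : b = (g : ℤ) + m := by linarith
  obtain rfl : c = (x : ℤ) + d := by linarith
  have hL := hahnE_eq_s17 m (m + p) g d x (by omega) (by omega)
  have hR := hahnE_eq_s17 p (m + p) g d' x (by omega) (by push_cast at *; omega)
  have hq : g + x - (x + d - m) = x + d' - p := by push_cast at *; omega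
  have hcore := core (m + p) m x (x + d - m) g (by push_cast at *; omega) (by push_cast at *; omega)
  have t1 : (((m + p : ℕ) : ℤ) - m).toNat = p := by push_cast; omega
  have t2 : ((m + p : ℕ) : ℤ) + (g + m) - 2 * m = (g : ℤ) + p := by push_cast; ring
  have t3 : ((m + p : ℕ) : ℤ) + (g + m) - m - (x + d) + x = (x : ℤ) + d' := by
    push_cast at *; linarith
  have t4 : (((x : ℤ) + d) - x).toNat = d := by omega
  have t5 : ((g : ℤ) + m - (x + d) + x).toNat = x + d' - p := by push_cast at *; omega
  have t6 : (((m + p : ℕ) : ℤ) + (g + m) - (x + d) - m).toNat = d' := by push_cast at *; omega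
  have t7 : (((x : ℤ) + d) - m).toNat = x + d - m := by omega
  have t8 : (((m + p : ℕ) : ℤ) - x).toNat = m + p - x := by push_cast; omega
  have hU : ∀ k ∈ range (x + 1), ((-1 : ℚ) ^ k * ((g + k).choose k : ℚ) *
        (if k ≤ p then ((m + p - k).choose (p - k) : ℚ) else 0) *
          ((x + d' - p).choose (x - k) : ℚ)) =
      (-1 : ℚ) ^ k * ((g + k).choose k : ℚ) *
        ((m + p - k).choose m : ℚ) * ((x + d' - p).choose (x - k) : ℚ) := by
    intro k hk
    have hk := mem_range.1 hk
    have hxa : x ≤ m + p := by exact_mod_cast hx3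
    congr 2
    split_ifs with h
    · rw [Nat.choose_symm_of_eq_add (by omega : m + p - k = (p - k) + m)]
    · rw [Nat.choose_eq_zero_of_lt (by omega)]; simp
  rw [hq] at hcore
  rw [sum_congr rfl hU] at hR
  rw [hcore] at hL
  rw [t1, t2, t3, t4, t5, t6, t7, t8, hL, hR]
  set S := ∑ k ∈ range (x + 1), (-1 : ℚ) ^ k * ((g + k).choose k : ℚ) *
        ((m + p - k).choose m : ℚ) * ((x + d' - p).choose (x - k) : ℚ)
  have hsign : (-1 : ℚ) ^ (m + p - x) * (-1) ^ p = (-1) ^ m * (-1) ^ x := by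
    rw [← pow_add, ← pow_add]
    have : m + p - x + p + 2 * x = m + x + 2 * p := by push_cast at *; omega
    have h2 := congrArg (fun n => (-1 : ℚ) ^ n) this
    simpa [pow_add, pow_mul] using h2
  have f1 := Nat.cast_ne_zero (R := ℚ).2 (Nat.factorial_ne_zero (x + d' - p))
  have f2 := Nat.cast_ne_zero (R := ℚ).2 (Nat.factorial_ne_zero (x + d - m))
  have f3 := Nat.cast_ne_zero (R := ℚ).2 (Nat.factorial_ne_zero d')
  have f4 := Nat.cast_ne_zero (R := ℚ).2 (Nat.factorial_ne_zero p)
  field_simp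
  linear_combination (-S) * hsign

end
end

section
/- Fix 0 ≤ h ≤ n and set A = {1,…,h}, B = {h+1,…,n}. For each 0 ≤ m ≤ n define the linear map X_h : M^{n−m,m} → ℂ[x₁,y₁,x₂,y₂] by X_h f = Σ_{X∈Ω_m} f(X)·x₁^{|A∖X|}·y₁^{|B∖X|}·x₂^{|A∩X|}·y₂^{|B∩X|}, and analogously on M^{n−m+1,m−1} and M^{n−m−1,m+1}. Then for every f ∈ M^{n−m,m}: X_h(d f) = (x₁·∂/∂x₂ + y₁·∂/∂y₂)(X_h f) and X_h(d* f) = (x₂·∂/∂x₁ + y₂·∂/∂y₁)(X_h f), with the conventions d = 0 on M^{n,0} and d* = 0 on M^{0,n}. -/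
/-!
For `i ∈ {1,…,n}` let `a i` be `x₁` or `y₁`, and `b i` be `x₂` or `y₂`, according to whether `i ∈ A`
or `i ∈ B`. Then `X_h f = ∑_S f(S) w(S)` with `w(S) = ∏_{i ∉ S} a i * ∏_{i ∈ S} b i`
(`Xh_eq_sum_wt`). The operator `x₁ ∂/∂x₂ + y₁ ∂/∂y₂` is the derivation with `a i ↦ 0`, `b i ↦ a i`,
so by the Leibniz rule it sends `w(S)` to `∑_{i ∈ S} w(S ∖ {i})` (`lower_wt`); likewise the other
operator sends `w(S)` to `∑_{i ∉ S} w(S ∪ {i})` (`raise_wt`). Both identities follow by exchanging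
sums over the pairs `(S, i)` with `i ∈ S` and the pairs `(T, i)` with `i ∉ T`, matched by
`T = S ∖ {i}` (`sum_mem_erase`).
-/

open Finset

noncomputable section

/-- The Schur–Weyl map `X_h : M^{n-m,m} → ℂ[x₁,y₁,x₂,y₂]`,
`X_h f = ∑_X f(X) x₁^{|A∖X|} y₁^{|B∖X|} x₂^{|A∩X|} y₂^{|B∩X|}` with `A = {1,…,h}`,
`B = {h+1,…,n}`; the variables `x₁, y₁, x₂, y₂` are `X 0, X 1, X 2, X 3`. -/
def Xh (n h : ℕ) (f : Finset (Fin n) → ℂ) : MvPolynomial (Fin 4) ℂ :=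
  ∑ X : Finset (Fin n),
    MvPolynomial.C (f X) *
      MvPolynomial.X 0 ^ (block n 0 h \ X).card *
      MvPolynomial.X 1 ^ (block n h (n - h) \ X).card *
      MvPolynomial.X 2 ^ (X ∩ block n 0 h).card *
      MvPolynomial.X 3 ^ (X ∩ block n h (n - h)).card

open MvPolynomial in
/-- The variable attached to `i` when `i` lies outside the subset: `x₁` on `A`, `y₁` on `B`. -/
def outVar (n h : ℕ) (i : Fin n) : MvPolynomial (Fin 4) ℂ :=
  if (i : ℕ) < h then X 0 else X 1

open MvPolynomial in
/-- The variable attached to `i` when `i` lies in the subset: `x₂` on `A`, `y₂` on `B`. -/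
def inVar (n h : ℕ) (i : Fin n) : MvPolynomial (Fin 4) ℂ :=
  if (i : ℕ) < h then X 2 else X 3

/-- The monomial by which `X_h` weights the subset `S`, written as a product over the ground set. -/
def wt (n h : ℕ) (S : Finset (Fin n)) : MvPolynomial (Fin 4) ℂ :=
  (∏ i ∈ Sᶜ, outVar n h i) * ∏ i ∈ S, inVar n h i

open MvPolynomial in
/-- The derivation `x₁ ∂/∂x₂ + y₁ ∂/∂y₂`. -/
def lowerD : Derivation ℂ (MvPolynomial (Fin 4) ℂ) (MvPolynomial (Fin 4) ℂ) :=
  (X 0 : MvPolynomial (Fin 4) ℂ) • pderiv 2 + (X 1 : MvPolynomial (Fin 4) ℂ) • pderiv 3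

open MvPolynomial in
/-- The derivation `x₂ ∂/∂x₁ + y₂ ∂/∂y₁`. -/
def raiseD : Derivation ℂ (MvPolynomial (Fin 4) ℂ) (MvPolynomial (Fin 4) ℂ) :=
  (X 2 : MvPolynomial (Fin 4) ℂ) • pderiv 0 + (X 3 : MvPolynomial (Fin 4) ℂ) • pderiv 1

lemma Xh_eq_sum_wt (n h : ℕ) (hh : h ≤ n) (f : Finset (Fin n) → ℂ) :
    Xh n h f = ∑ S : Finset (Fin n), f S • wt n h S := by
  unfold Xh
  refine Finset.sum_congr rfl fun S _ => ?_
  have h1 : block n 0 h \ S = Sᶜ.filter (fun i : Fin n => (i : ℕ) < h) := by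
    ext i; simp [block]; tauto
  have h2 : block n h (n - h) \ S = Sᶜ.filter (fun i : Fin n => ¬ (i : ℕ) < h) := by
    ext i; simp [block]; have := i.2; grind
  have h3 : S ∩ block n 0 h = S.filter (fun i : Fin n => (i : ℕ) < h) := by
    ext i; simp [block]
  have h4 : S ∩ block n h (n - h) = S.filter (fun i : Fin n => ¬ (i : ℕ) < h) := by
    ext i; simp [block]; have := i.2; grind
  rw [h1, h2, h3, h4, MvPolynomial.smul_eq_C_mul]
  simp only [wt, outVar, inVar, Finset.prod_ite, Finset.prod_const]
  ring

lemma derivation_prod {n : ℕ} (D : Derivation ℂ (MvPolynomial (Fin 4) ℂ) (MvPolynomial (Fin 4) ℂ))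
    (v : Fin n → MvPolynomial (Fin 4) ℂ) (S : Finset (Fin n)) :
    D (∏ i ∈ S, v i) = ∑ i ∈ S, (∏ j ∈ S.erase i, v j) * D (v i) := by
  induction S using Finset.induction_on with
  | empty => simp
  | insert k S hk ih =>
    rw [Finset.prod_insert hk, Derivation.leibniz, ih, Finset.sum_insert hk,
      Finset.erase_insert hk, Finset.smul_sum, add_comm]
    simp only [smul_eq_mul]
    congr 1
    refine Finset.sum_congr rfl fun i hi => ?_
    have hki : k ≠ i := fun e => hk (e ▸ hi)
    rw [Finset.erase_insert_of_ne hki, Finset.prod_insert (by simp [hk]), mul_assoc]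

lemma lowerD_outVar (n h : ℕ) (i : Fin n) : lowerD (outVar n h i) = 0 := by
  unfold lowerD outVar; split_ifs <;> simp [MvPolynomial.pderiv_X]

lemma lowerD_inVar (n h : ℕ) (i : Fin n) : lowerD (inVar n h i) = outVar n h i := by
  unfold lowerD inVar outVar; split_ifs <;> simp [MvPolynomial.pderiv_X]

lemma raiseD_outVar (n h : ℕ) (i : Fin n) : raiseD (outVar n h i) = inVar n h i := by
  unfold raiseD inVar outVar; split_ifs <;> simp [MvPolynomial.pderiv_X]

lemma raiseD_inVar (n h : ℕ) (i : Fin n) : raiseD (inVar n h i) = 0 := by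
  unfold raiseD inVar; split_ifs <;> simp [MvPolynomial.pderiv_X]

lemma lower_wt (n h : ℕ) (S : Finset (Fin n)) :
    lowerD (wt n h S) = ∑ i ∈ S, wt n h (S.erase i) := by
  rw [wt, Derivation.leibniz, derivation_prod, derivation_prod]
  simp only [lowerD_outVar, lowerD_inVar, mul_zero, Finset.sum_const_zero, add_zero,
    smul_eq_mul, Finset.mul_sum]
  refine Finset.sum_congr rfl fun i hi => ?_
  rw [wt, Finset.compl_erase, Finset.prod_insert (by simpa using hi)]
  ring

lemma raise_wt (n h : ℕ) (S : Finset (Fin n)) :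
    raiseD (wt n h S) = ∑ i ∈ Sᶜ, wt n h (insert i S) := by
  rw [wt, Derivation.leibniz, derivation_prod, derivation_prod]
  simp only [raiseD_outVar, raiseD_inVar, mul_zero, Finset.sum_const_zero, zero_add,
    smul_eq_mul, Finset.mul_sum]
  refine Finset.sum_congr rfl fun i hi => ?_
  rw [wt, Finset.compl_insert, Finset.prod_insert (by simpa using hi)]
  ring

/-- Removing `i` is a bijection from the pairs `(S, i)` with `i ∈ S` to the pairs `(T, i)` with
`i ∉ T`. -/
lemma sum_mem_erase {n : ℕ} {M : Type*} [AddCommMonoid M]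
    (F : Finset (Fin n) → Finset (Fin n) → M) :
    ∑ S : Finset (Fin n), ∑ i ∈ S, F S (S.erase i) =
      ∑ T : Finset (Fin n), ∑ i ∈ Tᶜ, F (insert i T) T := by
  rw [Finset.sum_sigma', Finset.sum_sigma']
  refine Finset.sum_bij' (fun p _ => ⟨p.1.erase p.2, p.2⟩) (fun p _ => ⟨insert p.2 p.1, p.2⟩)
    ?_ ?_ ?_ ?_ ?_
  · simp
  · simp
  · rintro ⟨S, i⟩ hp
    simp only [Finset.mem_sigma, Finset.mem_univ, true_and] at hp
    simp [Finset.insert_erase hp]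
  · rintro ⟨T, i⟩ hp
    simp only [Finset.mem_sigma, Finset.mem_univ, true_and, Finset.mem_compl] at hp
    simp [Finset.erase_insert hp]
  · rintro ⟨S, i⟩ hp
    simp only [Finset.mem_sigma, Finset.mem_univ, true_and] at hp
    simp [Finset.insert_erase hp]

/-- Lemma 4.1: `X_h (d f) = (x₁ ∂/∂x₂ + y₁ ∂/∂y₂)(X_h f)` and
`X_h (d* f) = (x₂ ∂/∂x₁ + y₂ ∂/∂y₁)(X_h f)`. -/
theorem stmt19 (n h m : ℕ) (hn : 1 ≤ n) (hh : h ≤ n) (hm : m ≤ n)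
    (f : Finset (Fin n) → ℂ) (hf : ∀ s : Finset (Fin n), s.card ≠ m → f s = 0) :
    Xh n h (dR n f) =
      MvPolynomial.X 0 * MvPolynomial.pderiv 2 (Xh n h f) +
        MvPolynomial.X 1 * MvPolynomial.pderiv 3 (Xh n h f) ∧
    Xh n h (dS n f) =
      MvPolynomial.X 2 * MvPolynomial.pderiv 0 (Xh n h f) +
        MvPolynomial.X 3 * MvPolynomial.pderiv 1 (Xh n h f) := by
  constructor
  · change _ = lowerD (Xh n h f)
    rw [Xh_eq_sum_wt n h hh, Xh_eq_sum_wt n h hh, map_sum]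
    simp only [Derivation.map_smul, lower_wt, dR, Finset.sum_smul, Finset.smul_sum]
    exact (sum_mem_erase fun S T => f S • wt n h T).symm
  · change _ = raiseD (Xh n h f)
    rw [Xh_eq_sum_wt n h hh, Xh_eq_sum_wt n h hh, map_sum]
    simp only [Derivation.map_smul, raise_wt, dS, Finset.sum_smul, Finset.smul_sum]
    exact sum_mem_erase fun S T => f T • wt n h S
end
end
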